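/- arXiv:2605.08903 — 5 statements merged into one kernel-verified Lean document; each statement's English description precedes it below -/
import Mathlib

section
/- Let Λᵢ, Λⱼ, and Σ be symmetric positive definite n×n real matrices, σᵢ, σⱼ > 0, and a, b, μ ∈ ℝⁿ. Then ∫_{ℝⁿ} σᵢ² exp(−(1/2)(w−a)ᵀΛᵢ⁻¹(w−a)) · σⱼ² exp(−(1/2)(w−b)ᵀΛⱼ⁻¹(w−b)) ρ_{μ,Σ}(w) dw = σᵢ²σⱼ² det((Λᵢ⁻¹+Λⱼ⁻¹)Σ + I)^{−1/2} exp(−(1/2)(a−b)ᵀ(Λᵢ+Λⱼ)⁻¹(a−b)) exp(−(1/2)(q−μ)ᵀF⁻¹(q−μ)), where q = Λⱼ(Λᵢ+Λⱼ)⁻¹a + Λᵢ(Λᵢ+Λⱼ)⁻¹b and F = (Λᵢ⁻¹+Λⱼ⁻¹)⁻¹ + Σ. -/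
/-!
The exponent is a sum of three quadratic forms in `w`. Completing the square (`add_quadForm_inv`)
merges two forms with covariances `S`, `T` and centres `a`, `b` into one form with precision
`S⁻¹ + T⁻¹` plus the constant `(a - b)ᵀ(S + T)⁻¹(a - b)`. Applying this to `Λi`, `Λj`, and then to
`(Λi⁻¹ + Λj⁻¹)⁻¹`, `Sig`, produces both exponentials of the claim and leaves a single Gaussian
with precision `Λi⁻¹ + Λj⁻¹ + Sig⁻¹`, whose integral is `integral_exp_quadForm`. The determinants
combine through `(Λi⁻¹ + Λj⁻¹ + Sig⁻¹) * Sig = (Λi⁻¹ + Λj⁻¹) * Sig + 1`.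
-/

open MeasureTheory Matrix
open scoped Matrix

/-- The Gaussian probability density on `ℝⁿ` with mean `μ` and covariance `S`. -/
noncomputable def gaussDensity {n : ℕ} (μ : Fin n → ℝ) (S : Matrix (Fin n) (Fin n) ℝ)
    (w : Fin n → ℝ) : ℝ :=
  (2 * Real.pi) ^ (-(n : ℝ) / 2) * S.det ^ (-(1 : ℝ) / 2) *
    Real.exp (-(1 / 2) * ((w - μ) ⬝ᵥ (S⁻¹ *ᵥ (w - μ))))

/-- The Gaussian integral. Writing `P = Bᵀ B`, the substitution `v = B w` reduces it to a product of
one-dimensional integrals. -/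
lemma integral_exp_quadForm {n : ℕ} (P : Matrix (Fin n) (Fin n) ℝ) (hP : P.PosDef)
    (m : Fin n → ℝ) :
    ∫ w : Fin n → ℝ, Real.exp (-(1 / 2) * ((w - m) ⬝ᵥ (P *ᵥ (w - m)))) =
      (2 * Real.pi) ^ ((n : ℝ) / 2) * P.det ^ (-(1 : ℝ) / 2) := by
  rw [integral_sub_right_eq_self
    (fun w : Fin n → ℝ => Real.exp (-(1 / 2) * (w ⬝ᵥ (P *ᵥ w)))) m]
  obtain ⟨B, rfl⟩ : ∃ B : Matrix (Fin n) (Fin n) ℝ, P = Bᵀ * B := by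
    open scoped MatrixOrder in
    obtain ⟨B, hB⟩ := CStarAlgebra.nonneg_iff_eq_star_mul_self.mp hP.posSemidef.nonneg
    exact ⟨B, by simpa [star_eq_conjTranspose] using hB⟩
  have hdet : (Bᵀ * B).det = B.det ^ 2 := by rw [det_mul, det_transpose, sq]
  have hB : B.det ≠ 0 := by
    have := hP.det_pos
    rw [hdet] at this
    exact fun h => by simp [h] at this
  have hstd : ∫ v : Fin n → ℝ, Real.exp (-(1 / 2) * (v ⬝ᵥ v)) =
      (2 * Real.pi) ^ ((n : ℝ) / 2) := by
    have h1 : ∀ v : Fin n → ℝ, Real.exp (-(1 / 2) * (v ⬝ᵥ v)) =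
        ∏ i, Real.exp (-(1 / 2) * v i ^ 2) := by
      intro v
      rw [← Real.exp_sum, dotProduct, Finset.mul_sum]
      simp only [sq]
    simp_rw [h1]
    rw [integral_fintype_prod_volume_eq_pow (fun x : ℝ => Real.exp (-(1 / 2) * x ^ 2)),
      integral_gaussian, Fintype.card_fin, Real.sqrt_eq_rpow, ← Real.rpow_natCast,
      ← Real.rpow_mul (by positivity)]
    congr 1 <;> ring
  have hquad : ∀ w : Fin n → ℝ, w ⬝ᵥ ((Bᵀ * B) *ᵥ w) = (B *ᵥ w) ⬝ᵥ (B *ᵥ w) := by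
    intro w
    rw [← mulVec_mulVec, dotProduct_mulVec, vecMul_transpose]
  simp_rw [hquad]
  have hmap : ∫ v : Fin n → ℝ, Real.exp (-(1 / 2) * (v ⬝ᵥ v)) ∂(Measure.map (toLin' B) volume) =
      ∫ w : Fin n → ℝ, Real.exp (-(1 / 2) * ((B *ᵥ w) ⬝ᵥ (B *ᵥ w))) := by
    rw [integral_map]
    · simp only [toLin'_apply]
    · exact (LinearMap.continuous_of_finiteDimensional _).aemeasurable
    · refine Continuous.aestronglyMeasurable ?_
      simp only [dotProduct]
      fun_prop
  rw [← hmap, Real.map_matrix_volume_pi_eq_smul_volume_pi hB, integral_smul_measure, hstd,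
    ENNReal.toReal_ofReal (abs_nonneg _), smul_eq_mul, mul_comm, hdet, ← sq_abs,
    ← Real.rpow_natCast, ← Real.rpow_mul (abs_nonneg _), abs_inv]
  norm_num [Real.rpow_neg_one]

/-- Completing the square. With `u = (S + T)⁻¹ (a - b)` and `q` the merged centre, one has
`a = q + S u` and `b = q - T u`, so the cross terms in `w - q` cancel. -/
lemma add_quadForm_inv {n : ℕ} (S T : Matrix (Fin n) (Fin n) ℝ) (hS : S.PosDef) (hT : T.PosDef)
    (a b w : Fin n → ℝ) :
    (w - a) ⬝ᵥ (S⁻¹ *ᵥ (w - a)) + (w - b) ⬝ᵥ (T⁻¹ *ᵥ (w - b)) =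
      (w - ((T * (S + T)⁻¹) *ᵥ a + (S * (S + T)⁻¹) *ᵥ b)) ⬝ᵥ
        ((S⁻¹ + T⁻¹) *ᵥ (w - ((T * (S + T)⁻¹) *ᵥ a + (S * (S + T)⁻¹) *ᵥ b))) +
      (a - b) ⬝ᵥ ((S + T)⁻¹ *ᵥ (a - b)) := by
  have hSu : IsUnit S.det := hS.det_pos.ne'.isUnit
  have hTu : IsUnit T.det := hT.det_pos.ne'.isUnit
  have hST : IsUnit (S + T).det := (hS.add hT).det_pos.ne'.isUnit
  have hsplit : ∀ x : Fin n → ℝ, x = (S * (S + T)⁻¹) *ᵥ x + (T * (S + T)⁻¹) *ᵥ x := by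
    intro x
    rw [← add_mulVec, ← add_mul, mul_nonsing_inv _ hST, one_mulVec]
  set q := (T * (S + T)⁻¹) *ᵥ a + (S * (S + T)⁻¹) *ᵥ b with hq
  obtain ⟨u, hu⟩ : ∃ u, u = (S + T)⁻¹ *ᵥ (a - b) := ⟨_, rfl⟩
  obtain ⟨x, hx⟩ : ∃ x, x = w - q := ⟨_, rfl⟩
  have ha : w - a = x - S *ᵥ u := by
    rw [hx, hu, mulVec_mulVec, mulVec_sub]
    nth_rewrite 1 [hsplit a]
    rw [hq]
    abel
  have hb : w - b = x + T *ᵥ u := by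
    rw [hx, hu, mulVec_mulVec, mulVec_sub]
    nth_rewrite 1 [hsplit b]
    rw [hq]
    abel
  have hab : a - b = S *ᵥ u + T *ᵥ u := by
    rw [← add_mulVec, hu, mulVec_mulVec, mul_nonsing_inv _ hST, one_mulVec]
  have hsymm : ∀ R : Matrix (Fin n) (Fin n) ℝ, R.PosDef → IsUnit R.det →
      (R *ᵥ u) ⬝ᵥ (R⁻¹ *ᵥ x) = x ⬝ᵥ u := by
    intro R hR hRu
    have hRt : Rᵀ = R := by simpa using hR.isHermitian.eq
    rw [dotProduct_comm, dotProduct_mulVec, ← mulVec_transpose, hRt, mulVec_mulVec,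
      mul_nonsing_inv _ hRu, one_mulVec]
  have hinv : ∀ R : Matrix (Fin n) (Fin n) ℝ, IsUnit R.det → R⁻¹ *ᵥ (R *ᵥ u) = u := by
    intro R hRu
    rw [mulVec_mulVec, nonsing_inv_mul _ hRu, one_mulVec]
  rw [← hu, ← hx, ha, hb, hab]
  simp only [mulVec_sub, mulVec_add, add_mulVec, hinv S hSu, hinv T hTu, sub_dotProduct,
    dotProduct_sub, add_dotProduct, dotProduct_add, hsymm S hS hSu, hsymm T hT hTu]
  ring

/-- Gaussian expectation of a product of two squared-exponential kernels with
signal variances `σᵢ², σⱼ²`, length-scale matrices `Λᵢ, Λⱼ`, and centers `a, b`,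
under a Gaussian input `w ~ N(μ, Σ)`. -/
theorem se_kernel_product_gaussian_expectation (n : ℕ)
    (Λi Λj Sig : Matrix (Fin n) (Fin n) ℝ)
    (hΛi : Λi.PosDef) (hΛj : Λj.PosDef) (hSig : Sig.PosDef)
    (σi σj : ℝ) (hσi : 0 < σi) (hσj : 0 < σj)
    (a b μ : Fin n → ℝ) :
    (∫ w : Fin n → ℝ,
        (σi ^ 2 * Real.exp (-(1 / 2) * ((w - a) ⬝ᵥ (Λi⁻¹ *ᵥ (w - a))))) *
        (σj ^ 2 * Real.exp (-(1 / 2) * ((w - b) ⬝ᵥ (Λj⁻¹ *ᵥ (w - b))))) *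
          gaussDensity μ Sig w)
      = σi ^ 2 * σj ^ 2 * (((Λi⁻¹ + Λj⁻¹) * Sig + 1).det) ^ (-(1 : ℝ) / 2) *
          Real.exp (-(1 / 2) * ((a - b) ⬝ᵥ ((Λi + Λj)⁻¹ *ᵥ (a - b)))) *
          Real.exp (-(1 / 2) *
            ((((Λj * (Λi + Λj)⁻¹) *ᵥ a + (Λi * (Λi + Λj)⁻¹) *ᵥ b) - μ) ⬝ᵥ
              (((Λi⁻¹ + Λj⁻¹)⁻¹ + Sig)⁻¹ *ᵥ
                (((Λj * (Λi + Λj)⁻¹) *ᵥ a + (Λi * (Λi + Λj)⁻¹) *ᵥ b) - μ)))) := by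
  set q := (Λj * (Λi + Λj)⁻¹) *ᵥ a + (Λi * (Λi + Λj)⁻¹) *ᵥ b with hq
  set P := Λi⁻¹ + Λj⁻¹ with hPdef
  have hP : P.PosDef := hΛi.inv.add hΛj.inv
  have hPP : (P⁻¹)⁻¹ = P := nonsing_inv_nonsing_inv _ hP.det_pos.ne'.isUnit
  set c := (Sig * (P⁻¹ + Sig)⁻¹) *ᵥ q + (P⁻¹ * (P⁻¹ + Sig)⁻¹) *ᵥ μ with hc
  have hR : (P + Sig⁻¹).PosDef := hP.add hSig.inv
  have hdet : (P * Sig + 1).det = (P + Sig⁻¹).det * Sig.det := by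
    rw [← det_mul, add_mul P, nonsing_inv_mul _ hSig.det_pos.ne'.isUnit]
  have hpi : (2 * Real.pi) ^ (-(n : ℝ) / 2) * (2 * Real.pi) ^ ((n : ℝ) / 2) = 1 := by
    rw [← Real.rpow_add (by positivity), neg_div, neg_add_cancel, Real.rpow_zero]
  have hint : ∀ w : Fin n → ℝ,
      (σi ^ 2 * Real.exp (-(1 / 2) * ((w - a) ⬝ᵥ (Λi⁻¹ *ᵥ (w - a))))) *
        (σj ^ 2 * Real.exp (-(1 / 2) * ((w - b) ⬝ᵥ (Λj⁻¹ *ᵥ (w - b))))) *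
          gaussDensity μ Sig w =
      (σi ^ 2 * σj ^ 2 * ((2 * Real.pi) ^ (-(n : ℝ) / 2) * Sig.det ^ (-(1 : ℝ) / 2)) *
        Real.exp (-(1 / 2) * ((a - b) ⬝ᵥ ((Λi + Λj)⁻¹ *ᵥ (a - b)))) *
        Real.exp (-(1 / 2) * ((q - μ) ⬝ᵥ ((P⁻¹ + Sig)⁻¹ *ᵥ (q - μ))))) *
        Real.exp (-(1 / 2) * ((w - c) ⬝ᵥ ((P + Sig⁻¹) *ᵥ (w - c)))) := by
    intro w
    have h1 := add_quadForm_inv Λi Λj hΛi hΛj a b w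
    have h2 := add_quadForm_inv P⁻¹ Sig hP.inv hSig q μ w
    rw [← hq, ← hPdef] at h1
    rw [hPP, ← hc] at h2
    have hexp : Real.exp (-(1 / 2) * ((w - a) ⬝ᵥ (Λi⁻¹ *ᵥ (w - a)))) *
        Real.exp (-(1 / 2) * ((w - b) ⬝ᵥ (Λj⁻¹ *ᵥ (w - b)))) *
        Real.exp (-(1 / 2) * ((w - μ) ⬝ᵥ (Sig⁻¹ *ᵥ (w - μ)))) =
        Real.exp (-(1 / 2) * ((a - b) ⬝ᵥ ((Λi + Λj)⁻¹ *ᵥ (a - b)))) *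
        Real.exp (-(1 / 2) * ((q - μ) ⬝ᵥ ((P⁻¹ + Sig)⁻¹ *ᵥ (q - μ)))) *
        Real.exp (-(1 / 2) * ((w - c) ⬝ᵥ ((P + Sig⁻¹) *ᵥ (w - c)))) := by
      simp only [← Real.exp_add]
      congr 1
      linarith
    rw [gaussDensity]
    linear_combination
      (σi ^ 2 * σj ^ 2 * ((2 * Real.pi) ^ (-(n : ℝ) / 2) * Sig.det ^ (-(1 : ℝ) / 2))) * hexp
  simp_rw [hint]
  rw [integral_const_mul, integral_exp_quadForm _ hR, hdet,
    Real.mul_rpow hR.det_pos.le hSig.det_pos.le]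
  linear_combination (σi ^ 2 * σj ^ 2 * Sig.det ^ (-(1 : ℝ) / 2) *
    (P + Sig⁻¹).det ^ (-(1 : ℝ) / 2) *
    Real.exp (-(1 / 2) * ((a - b) ⬝ᵥ ((Λi + Λj)⁻¹ *ᵥ (a - b)))) *
    Real.exp (-(1 / 2) * ((q - μ) ⬝ᵥ ((P⁻¹ + Sig)⁻¹ *ᵥ (q - μ))))) * hpi
end

section
/- Let Λᵢ, Λⱼ, and Σ be symmetric positive definite n×n real matrices, σᵢ, σⱼ > 0, μ ∈ ℝⁿ, inducing inputs w̆₁, …, w̆_M ∈ ℝⁿ, and weight vectors a, b ∈ ℝᴹ. Define μ̆ᵢ(w) = Σ_{τ=1}^M a_τ σᵢ² exp(−(1/2)(w−w̆_τ)ᵀΛᵢ⁻¹(w−w̆_τ)) and μ̆ⱼ(w) = Σ_{τ̃=1}^M b_{τ̃} σⱼ² exp(−(1/2)(w−w̆_{τ̃})ᵀΛⱼ⁻¹(w−w̆_{τ̃})). Then ∫_{ℝⁿ} μ̆ᵢ(w) μ̆ⱼ(w) ρ_{μ,Σ}(w) dw = aᵀ L b, where the M×M matrix L has entries [L]_{τ,τ̃}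 = σᵢ²σⱼ² det((Λᵢ⁻¹+Λⱼ⁻¹)Σ + I)^{−1/2} exp(−(1/2)(w̆_τ−w̆_{τ̃})ᵀ(Λᵢ+Λⱼ)⁻¹(w̆_τ−w̆_{τ̃})) exp(−(1/2)(q_{τ,τ̃}−μ)ᵀF⁻¹(q_{τ,τ̃}−μ)), with q_{τ,τ̃} = Λⱼ(Λᵢ+Λⱼ)⁻¹w̆_τ + Λᵢ(Λᵢ+Λⱼ)⁻¹w̆_{τ̃} and F = (Λᵢ⁻¹+Λⱼ⁻¹)⁻¹ + Σ. -/
/-!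
For each pair of inducing inputs the integrand is a product of three Gaussian exponentials in `w`.
Completing the square (`quad_add_quad`) merges two exponentials with covariances `S`, `T` and
centres `x`, `y` into one with precision `S⁻¹ + T⁻¹`, times a constant involving `(S + T)⁻¹` only.
Merging the two kernels, and then the result with the input density, leaves a single Gaussian
with precision `P = Λᵢ⁻¹ + Λⱼ⁻¹ + Σ⁻¹`, whose integral `(2π)^(n/2) det(P)^(-1/2)` is
`integral_exp_quad`. The determinant prefactor of `L` is `det(P) det(Σ) = det((Λᵢ⁻¹ + Λⱼ⁻¹) Σ + 1)`.
Integrability of each term then allows the finite double sum to be pulled out of the integral.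
-/

open MeasureTheory Matrix
open scoped Matrix

/-- The standard Gaussian exponential on `ℝⁿ` factors over the coordinates. -/
lemma integral_exp_std (n : ℕ) :
    Integrable (fun w : Fin n → ℝ => Real.exp (-(1 / 2) * (w ⬝ᵥ w))) ∧
    ∫ w : Fin n → ℝ, Real.exp (-(1 / 2) * (w ⬝ᵥ w)) = (2 * Real.pi) ^ ((n : ℝ) / 2) := by
  have h : (fun w : Fin n → ℝ => Real.exp (-(1 / 2) * (w ⬝ᵥ w))) =
      fun w => ∏ i, Real.exp (-(1 / 2) * w i ^ 2) := by
    funext w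
    rw [← Real.exp_sum, ← Finset.mul_sum]
    simp [dotProduct, sq]
  rw [h]
  constructor
  · exact Integrable.fintype_prod (f := fun _ (x : ℝ) => Real.exp (-(1 / 2) * x ^ 2))
      (fun _ => integrable_exp_neg_mul_sq (by norm_num))
  · rw [integral_fintype_prod_volume_eq_pow (fun x : ℝ => Real.exp (-(1 / 2) * x ^ 2)),
      integral_gaussian, Fintype.card_fin, Real.sqrt_eq_rpow, ← Real.rpow_natCast,
      ← Real.rpow_mul (by positivity)]
    congr 1 <;> ring

open scoped MatrixOrder in
/-- Every positive definite `P` is `Bᵀ B` with `B` invertible, so the linear substitution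
`w ↦ B w` reduces the integral to the standard Gaussian. -/
lemma integral_exp_quad {n : ℕ} {P : Matrix (Fin n) (Fin n) ℝ} (hP : P.PosDef)
    (m : Fin n → ℝ) :
    Integrable (fun w : Fin n → ℝ => Real.exp (-(1 / 2) * ((w - m) ⬝ᵥ (P *ᵥ (w - m))))) ∧
    ∫ w : Fin n → ℝ, Real.exp (-(1 / 2) * ((w - m) ⬝ᵥ (P *ᵥ (w - m)))) =
      (2 * Real.pi) ^ ((n : ℝ) / 2) * P.det ^ (-(1 : ℝ) / 2) := by
  obtain ⟨B, rfl⟩ := CStarAlgebra.nonneg_iff_eq_star_mul_self.mp hP.posSemidef.nonneg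
  have hdet : (star B * B).det = B.det ^ 2 := by
    rw [det_mul, star_eq_conjTranspose, det_conjTranspose, star_trivial, sq]
  have hB : B.det ≠ 0 := by
    intro h0
    have := hP.det_pos
    rw [hdet, h0] at this
    norm_num at this
  have hq : ∀ v : Fin n → ℝ, v ⬝ᵥ ((star B * B) *ᵥ v) = toLin' B v ⬝ᵥ toLin' B v := by
    intro v
    rw [toLin'_apply, ← mulVec_mulVec, dotProduct_mulVec, star_eq_conjTranspose,
      conjTranspose_eq_transpose_of_trivial, vecMul_transpose]
  have hmeas : AEMeasurable (toLin' B) (volume : Measure (Fin n → ℝ)) :=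
    (LinearMap.continuous_of_finiteDimensional _).aemeasurable
  have hsm : AEStronglyMeasurable (fun v : Fin n → ℝ => Real.exp (-(1 / 2) * (v ⬝ᵥ v)))
      (Measure.map (toLin' B) volume) := by
    apply Continuous.aestronglyMeasurable
    simp only [dotProduct]
    fun_prop
  have hc : (B.det ^ 2) ^ (-(1 : ℝ) / 2) = |(B.det)⁻¹| := by
    rw [← sq_abs, ← Real.rpow_natCast, ← Real.rpow_mul (abs_nonneg _), abs_inv]
    norm_num [Real.rpow_neg_one]
  simp only [hq]
  constructor
  · refine Integrable.comp_sub_right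
      (f := fun w : Fin n → ℝ => Real.exp (-(1 / 2) * (toLin' B w ⬝ᵥ toLin' B w))) ?_ m
    refine (integrable_map_measure hsm hmeas).1 ?_
    rw [Real.map_matrix_volume_pi_eq_smul_volume_pi hB]
    exact (integral_exp_std n).1.smul_measure ENNReal.ofReal_ne_top
  · rw [integral_sub_right_eq_self
      (fun w : Fin n → ℝ => Real.exp (-(1 / 2) * (toLin' B w ⬝ᵥ toLin' B w))) m,
      ← integral_map hmeas hsm, Real.map_matrix_volume_pi_eq_smul_volume_pi hB,
      integral_smul_measure, (integral_exp_std n).2, ENNReal.toReal_ofReal (abs_nonneg _),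
      hdet, hc, smul_eq_mul, mul_comm]

/-- Completing the square. With `p = (S + T)⁻¹ (x - y)`, the common centre
`m = T (S + T)⁻¹ x + S (S + T)⁻¹ y` satisfies `m - x = -S p` and `m - y = T p`, so the
terms linear in `w - m` cancel. -/
lemma quad_add_quad {n : ℕ} {S T : Matrix (Fin n) (Fin n) ℝ} (hS : S.PosDef) (hT : T.PosDef)
    (x y w : Fin n → ℝ) :
    (w - x) ⬝ᵥ (S⁻¹ *ᵥ (w - x)) + (w - y) ⬝ᵥ (T⁻¹ *ᵥ (w - y)) =
      (w - ((T * (S + T)⁻¹) *ᵥ x + (S * (S + T)⁻¹) *ᵥ y)) ⬝ᵥ ((S⁻¹ + T⁻¹) *ᵥ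
        (w - ((T * (S + T)⁻¹) *ᵥ x + (S * (S + T)⁻¹) *ᵥ y))) +
      (x - y) ⬝ᵥ ((S + T)⁻¹ *ᵥ (x - y)) := by
  have hSu : IsUnit S.det := hS.det_pos.ne'.isUnit
  have hTu : IsUnit T.det := hT.det_pos.ne'.isUnit
  have hU : IsUnit (S + T).det := (hS.add hT).det_pos.ne'.isUnit
  have hst : S * (S + T)⁻¹ + T * (S + T)⁻¹ = 1 := by
    rw [← add_mul, mul_nonsing_inv _ hU]
  set p := (S + T)⁻¹ *ᵥ (x - y) with hp
  set u := w - ((T * (S + T)⁻¹) *ᵥ x + (S * (S + T)⁻¹) *ᵥ y) with hu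
  have hx : w - x = u - S *ᵥ p := by
    have h1 : x = (S * (S + T)⁻¹ + T * (S + T)⁻¹) *ᵥ x := by rw [hst, one_mulVec]
    rw [hu, hp, mulVec_mulVec, mulVec_sub]
    nth_rewrite 1 [h1]
    rw [add_mulVec]
    abel
  have hy : w - y = u + T *ᵥ p := by
    have h1 : y = (S * (S + T)⁻¹ + T * (S + T)⁻¹) *ᵥ y := by rw [hst, one_mulVec]
    rw [hu, hp, mulVec_mulVec, mulVec_sub]
    nth_rewrite 1 [h1]
    rw [add_mulVec]
    abel
  have hxy : x - y = S *ᵥ p + T *ᵥ p := by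
    rw [← add_mulVec, hp, mulVec_mulVec, mul_nonsing_inv _ hU, one_mulVec]
  have hSp : S⁻¹ *ᵥ (S *ᵥ p) = p := by rw [mulVec_mulVec, nonsing_inv_mul _ hSu, one_mulVec]
  have hTp : T⁻¹ *ᵥ (T *ᵥ p) = p := by rw [mulVec_mulVec, nonsing_inv_mul _ hTu, one_mulVec]
  -- Symmetry of `S⁻¹` and `T⁻¹` moves the inverse onto the other factor of the cross terms.
  have key : ∀ {A : Matrix (Fin n) (Fin n) ℝ}, A.PosDef → A⁻¹ *ᵥ (A *ᵥ p) = p →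
      (A *ᵥ p) ⬝ᵥ (A⁻¹ *ᵥ u) = p ⬝ᵥ u := by
    intro A hA hAp
    have hs : (A⁻¹)ᵀ = A⁻¹ := by
      rw [← conjTranspose_eq_transpose_of_trivial]; exact hA.inv.isHermitian
    rw [dotProduct_mulVec, ← mulVec_transpose, hs, hAp]
  have kS := key hS hSp
  have kT := key hT hTp
  clear_value u p
  rw [hx, hy, hxy]
  simp only [mulVec_sub, mulVec_add, add_mulVec, dotProduct_add, dotProduct_sub, add_dotProduct,
    sub_dotProduct, hSp, hTp, kS, kT, dotProduct_comm u p]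
  ring

/-- Both exponents of the kernels and that of the input density merge into a single Gaussian of
precision `Λᵢ⁻¹ + Λⱼ⁻¹ + Σ⁻¹`. -/
lemma term_integral {n : ℕ} {Λi Λj Sig : Matrix (Fin n) (Fin n) ℝ}
    (hΛi : Λi.PosDef) (hΛj : Λj.PosDef) (hSig : Sig.PosDef) (μ x y : Fin n → ℝ) :
    Integrable (fun w : Fin n → ℝ => Real.exp (-(1 / 2) * ((w - x) ⬝ᵥ (Λi⁻¹ *ᵥ (w - x)))) *
      Real.exp (-(1 / 2) * ((w - y) ⬝ᵥ (Λj⁻¹ *ᵥ (w - y)))) * gaussDensity μ Sig w) ∧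
    ∫ w : Fin n → ℝ, Real.exp (-(1 / 2) * ((w - x) ⬝ᵥ (Λi⁻¹ *ᵥ (w - x)))) *
      Real.exp (-(1 / 2) * ((w - y) ⬝ᵥ (Λj⁻¹ *ᵥ (w - y)))) * gaussDensity μ Sig w =
      (((Λi⁻¹ + Λj⁻¹) * Sig + 1).det) ^ (-(1 : ℝ) / 2) *
        Real.exp (-(1 / 2) * ((x - y) ⬝ᵥ ((Λi + Λj)⁻¹ *ᵥ (x - y)))) *
        Real.exp (-(1 / 2) *
          ((((Λj * (Λi + Λj)⁻¹) *ᵥ x + (Λi * (Λi + Λj)⁻¹) *ᵥ y) - μ) ⬝ᵥ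
            (((Λi⁻¹ + Λj⁻¹)⁻¹ + Sig)⁻¹ *ᵥ
              (((Λj * (Λi + Λj)⁻¹) *ᵥ x + (Λi * (Λi + Λj)⁻¹) *ᵥ y) - μ)))) := by
  set q := (Λj * (Λi + Λj)⁻¹) *ᵥ x + (Λi * (Λi + Λj)⁻¹) *ᵥ y with hq
  have hQ : (Λi⁻¹ + Λj⁻¹).PosDef := hΛi.inv.add hΛj.inv
  have hP : (Λi⁻¹ + Λj⁻¹ + Sig⁻¹).PosDef := hQ.add hSig.inv
  have hSu : IsUnit Sig.det := hSig.det_pos.ne'.isUnit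
  set c := Real.exp (-(1 / 2) * ((x - y) ⬝ᵥ ((Λi + Λj)⁻¹ *ᵥ (x - y)))) with hc
  set d := Real.exp (-(1 / 2) * ((q - μ) ⬝ᵥ (((Λi⁻¹ + Λj⁻¹)⁻¹ + Sig)⁻¹ *ᵥ (q - μ)))) with hd
  set k := (2 * Real.pi) ^ (-(n : ℝ) / 2) * Sig.det ^ (-(1 : ℝ) / 2) with hk
  obtain ⟨m, hm⟩ : ∃ m : Fin n → ℝ, ∀ w : Fin n → ℝ,
      Real.exp (-(1 / 2) * ((w - x) ⬝ᵥ (Λi⁻¹ *ᵥ (w - x)))) *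
      Real.exp (-(1 / 2) * ((w - y) ⬝ᵥ (Λj⁻¹ *ᵥ (w - y)))) * gaussDensity μ Sig w =
      (k * c * d) *
        Real.exp (-(1 / 2) * ((w - m) ⬝ᵥ ((Λi⁻¹ + Λj⁻¹ + Sig⁻¹) *ᵥ (w - m)))) := by
    -- The merged kernels have covariance `(Λᵢ⁻¹ + Λⱼ⁻¹)⁻¹` and centre `q`.
    have hqq := quad_add_quad hQ.inv hSig q μ
    rw [nonsing_inv_nonsing_inv _ hQ.det_pos.ne'.isUnit] at hqq
    refine ⟨(Sig * ((Λi⁻¹ + Λj⁻¹)⁻¹ + Sig)⁻¹) *ᵥ q +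
      ((Λi⁻¹ + Λj⁻¹)⁻¹ * ((Λi⁻¹ + Λj⁻¹)⁻¹ + Sig)⁻¹) *ᵥ μ, fun w => ?_⟩
    have h1 := quad_add_quad hΛi hΛj x y w
    rw [← hq] at h1
    have h2 := hqq w
    rw [gaussDensity, ← hk, hc, hd]
    calc _ = k * Real.exp (-(1 / 2) * (((w - x) ⬝ᵥ (Λi⁻¹ *ᵥ (w - x)) +
              (w - y) ⬝ᵥ (Λj⁻¹ *ᵥ (w - y))) + (w - μ) ⬝ᵥ (Sig⁻¹ *ᵥ (w - μ)))) := by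
            rw [mul_add, mul_add, Real.exp_add, Real.exp_add]; ring
      _ = _ := by
            rw [h1, add_right_comm, h2, mul_add, mul_add, Real.exp_add, Real.exp_add]; ring
  simp only [hm]
  refine ⟨(integral_exp_quad hP m).1.const_mul _, ?_⟩
  rw [integral_const_mul, (integral_exp_quad hP m).2]
  have hdet : ((Λi⁻¹ + Λj⁻¹) * Sig + 1).det = Sig.det * (Λi⁻¹ + Λj⁻¹ + Sig⁻¹).det := by
    rw [mul_comm, ← det_mul, add_mul (Λi⁻¹ + Λj⁻¹), nonsing_inv_mul _ hSu]
  have hpi : (2 * Real.pi) ^ (-(n : ℝ) / 2) * (2 * Real.pi) ^ ((n : ℝ) / 2) = 1 := by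
    rw [← Real.rpow_add (by positivity), neg_div, neg_add_cancel, Real.rpow_zero]
  rw [hdet, Real.mul_rpow hSig.det_pos.le hP.det_pos.le, hk]
  linear_combination (Sig.det ^ (-(1 : ℝ) / 2) *
    (Λi⁻¹ + Λj⁻¹ + Sig⁻¹).det ^ (-(1 : ℝ) / 2) * c * d) * hpi

/-- Bilinear-form identity `E[μ̆ᵢ(w)μ̆ⱼ(w)] = aᵀ L b` for the Gaussian expectation of a
product of two sparse GP predictive means under a Gaussian input `w ~ N(μ, Σ)`. -/
theorem sparse_gp_mm_bilinear (n M : ℕ)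
    (Λi Λj Sig : Matrix (Fin n) (Fin n) ℝ)
    (hΛi : Λi.PosDef) (hΛj : Λj.PosDef) (hSig : Sig.PosDef)
    (σi σj : ℝ) (hσi : 0 < σi) (hσj : 0 < σj)
    (μ : Fin n → ℝ) (wi : Fin M → Fin n → ℝ) (a b : Fin M → ℝ)
    (L : Matrix (Fin M) (Fin M) ℝ)
    (hL : ∀ τ τ' : Fin M, L τ τ' =
      σi ^ 2 * σj ^ 2 * (((Λi⁻¹ + Λj⁻¹) * Sig + 1).det) ^ (-(1 : ℝ) / 2) *
        Real.exp (-(1 / 2) * ((wi τ - wi τ') ⬝ᵥ ((Λi + Λj)⁻¹ *ᵥ (wi τ - wi τ')))) *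
        Real.exp (-(1 / 2) *
          ((((Λj * (Λi + Λj)⁻¹) *ᵥ wi τ + (Λi * (Λi + Λj)⁻¹) *ᵥ wi τ') - μ) ⬝ᵥ
            (((Λi⁻¹ + Λj⁻¹)⁻¹ + Sig)⁻¹ *ᵥ
              (((Λj * (Λi + Λj)⁻¹) *ᵥ wi τ + (Λi * (Λi + Λj)⁻¹) *ᵥ wi τ') - μ))))) :
    (∫ w : Fin n → ℝ,
        (∑ τ : Fin M,
          a τ * (σi ^ 2 * Real.exp (-(1 / 2) * ((w - wi τ) ⬝ᵥ (Λi⁻¹ *ᵥ (w - wi τ)))))) *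
        (∑ τ' : Fin M,
          b τ' * (σj ^ 2 * Real.exp (-(1 / 2) * ((w - wi τ') ⬝ᵥ (Λj⁻¹ *ᵥ (w - wi τ')))))) *
          gaussDensity μ Sig w)
      = a ⬝ᵥ (L *ᵥ b) := by
  have hsplit : ∀ w : Fin n → ℝ,
      (∑ τ : Fin M,
          a τ * (σi ^ 2 * Real.exp (-(1 / 2) * ((w - wi τ) ⬝ᵥ (Λi⁻¹ *ᵥ (w - wi τ)))))) *
        (∑ τ' : Fin M,
          b τ' * (σj ^ 2 * Real.exp (-(1 / 2) * ((w - wi τ') ⬝ᵥ (Λj⁻¹ *ᵥ (w - wi τ')))))) *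
          gaussDensity μ Sig w =
      ∑ τ : Fin M, ∑ τ' : Fin M, (a τ * b τ' * (σi ^ 2 * σj ^ 2)) *
        (Real.exp (-(1 / 2) * ((w - wi τ) ⬝ᵥ (Λi⁻¹ *ᵥ (w - wi τ)))) *
          Real.exp (-(1 / 2) * ((w - wi τ') ⬝ᵥ (Λj⁻¹ *ᵥ (w - wi τ')))) *
          gaussDensity μ Sig w) := by
    intro w
    rw [Finset.sum_mul_sum, Finset.sum_mul]
    refine Finset.sum_congr rfl fun τ _ => ?_
    rw [Finset.sum_mul]
    exact Finset.sum_congr rfl fun τ' _ => by ring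
  have hterm := fun τ τ' => term_integral hΛi hΛj hSig μ (wi τ) (wi τ')
  have hab : a ⬝ᵥ (L *ᵥ b) = ∑ τ, ∑ τ', a τ * (L τ τ' * b τ') := by
    simp only [dotProduct, mulVec, Finset.mul_sum]
  rw [hab]
  simp only [hsplit]
  rw [integral_finsetSum _ fun τ _ =>
    integrable_finsetSum _ fun τ' _ => (hterm τ τ').1.const_mul _]
  refine Finset.sum_congr rfl fun τ _ => ?_
  rw [integral_finsetSum _ fun τ' _ => (hterm τ τ').1.const_mul _]
  refine Finset.sum_congr rfl fun τ' _ => ?_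
  rw [integral_const_mul, (hterm τ τ').2, hL]
  ring
end

section
/- Let Λ and Σ be symmetric positive definite n×n real matrices, σ > 0, μ ∈ ℝⁿ, inducing inputs w̆₁, …, w̆_M ∈ ℝⁿ, and α ∈ ℝᴹ. Define μ̆(w) = Σ_{τ=1}^M α_τ σ² exp(−(1/2)(w−w̆_τ)ᵀΛ⁻¹(w−w̆_τ)). Then the vector-valued integral satisfies ∫_{ℝⁿ} (w − μ) μ̆(w) ρ_{μ,Σ}(w) dw = Σ_{τ=1}^M α_τ l_τ(μ, Σ) · Σ(Λ+Σ)⁻¹(w̆_τ − μ), where l_τ(μ, Σ) = σ² det(Λ⁻¹Σ + I)^{−1/2} exp(−(1/2)(μ−w̆_τ)ᵀ(Λ+Σ)⁻¹(μ−w̆_τ)). -/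
/-!
Each summand of the integrand is a product of two Gaussian exponentials. With
`d = a - μ` for an inducing input `a`, `e = (Λ + Sig)⁻¹ d` and `c = Sig e`, one has `d - c = Λ e`,
so completing the square (`quad_complete`) shows that after the translation `w = u + c + μ` the
product of exponentials is a constant times `exp (-½ uᵀ P u)` with `P = Λ⁻¹ + Sig⁻¹`
(`kernel_mul_density_translate`), while `w - μ = u + c`. The part linear in `u` is odd and
integrates to zero; the part proportional to `c` produces the normalising constant
`(2π)^{n/2} det(P)^{-1/2}` (`integral_gauss`), and `det(Λ⁻¹ Sig + 1) = det(P) det(Sig)`.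

Integrability and the normalising constant come from factoring `P = Bᵀ B` with `B` invertible: the
linear change of variables `y = B u` reduces both to products of one-dimensional integrals.
-/

open MeasureTheory Matrix
open scoped Matrix

open scoped MatrixOrder ComplexOrder Matrix.Norms.L2Operator in
/-- A positive definite real matrix has a factorisation `Bᵀ B` with `B` invertible. -/
lemma exists_factor {n : ℕ} {P : Matrix (Fin n) (Fin n) ℝ} (hP : P.PosDef) :
    ∃ B : Matrix (Fin n) (Fin n) ℝ, B.det ≠ 0 ∧ P = Bᵀ * B := by
  obtain ⟨y, hy, h⟩ := CStarAlgebra.isStrictlyPositive_iff_eq_star_mul_self.mp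
    hP.isStrictlyPositive
  refine ⟨y, ((Matrix.isUnit_iff_isUnit_det y).mp hy).ne_zero, ?_⟩
  rw [h, Matrix.star_eq_conjTranspose, Matrix.conjTranspose_eq_transpose_of_trivial]

lemma quad_factor {n : ℕ} (B : Matrix (Fin n) (Fin n) ℝ) (u : Fin n → ℝ) :
    u ⬝ᵥ ((Bᵀ * B) *ᵥ u) = (B *ᵥ u) ⬝ᵥ (B *ᵥ u) := by
  rw [← Matrix.mulVec_mulVec, Matrix.dotProduct_mulVec, Matrix.vecMul_transpose]

lemma exp_dot_self {n : ℕ} (y : Fin n → ℝ) :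
    Real.exp (-(1 / 2) * (y ⬝ᵥ y)) = ∏ i, Real.exp (-(1 / 2) * y i ^ 2) := by
  rw [← Real.exp_sum, dotProduct, Finset.mul_sum]
  simp only [pow_two]

lemma integrable_std {n : ℕ} :
    Integrable (fun y : Fin n → ℝ => Real.exp (-(1 / 2) * (y ⬝ᵥ y))) := by
  simp only [exp_dot_self]
  exact Integrable.fintype_prod (f := fun _ x => Real.exp (-(1 / 2) * x ^ 2))
    (fun _ => integrable_exp_neg_mul_sq (by norm_num))

lemma integrable_std_smul {n : ℕ} :
    Integrable (fun y : Fin n → ℝ => Real.exp (-(1 / 2) * (y ⬝ᵥ y)) • y) := by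
  refine Integrable.of_eval fun i => ?_
  have h : Integrable (fun y : Fin n → ℝ =>
      ∏ j, (if j = i then y j else 1) * Real.exp (-(1 / 2) * y j ^ 2)) := by
    refine Integrable.fintype_prod
      (f := fun j x => (if j = i then x else 1) * Real.exp (-(1 / 2) * x ^ 2)) fun j => ?_
    by_cases hj : j = i
    · simpa only [hj, if_true] using integrable_mul_exp_neg_mul_sq (b := 1 / 2) (by norm_num)
    · simpa only [hj, if_false, one_mul] using
        integrable_exp_neg_mul_sq (b := 1 / 2) (by norm_num)
  refine h.congr (Filter.Eventually.of_forall fun y => ?_)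
  simp only [Finset.prod_mul_distrib, Pi.smul_apply, smul_eq_mul, exp_dot_self]
  rw [Finset.prod_ite_eq' Finset.univ i, if_pos (Finset.mem_univ i), mul_comm]

lemma integral_std {n : ℕ} :
    ∫ y : Fin n → ℝ, Real.exp (-(1 / 2) * (y ⬝ᵥ y)) = (2 * Real.pi) ^ ((n : ℝ) / 2) := by
  simp only [exp_dot_self]
  rw [integral_fintype_prod_volume_eq_pow (fun x : ℝ => Real.exp (-(1 / 2) * x ^ 2)),
    integral_gaussian, Fintype.card_fin, Real.sqrt_eq_rpow, ← Real.rpow_natCast,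
    ← Real.rpow_mul (by positivity)]
  congr 1 <;> ring

lemma integrable_comp_mulVec {n : ℕ} {E : Type*} [NormedAddCommGroup E]
    {B : Matrix (Fin n) (Fin n) ℝ} (hB : B.det ≠ 0) {f : (Fin n → ℝ) → E} (hf : Integrable f) :
    Integrable (fun u => f (B *ᵥ u)) := by
  have h := hf.smul_measure (c := ENNReal.ofReal |B.det⁻¹|) ENNReal.ofReal_ne_top
  rw [← Real.map_matrix_volume_pi_eq_smul_volume_pi hB] at h
  exact h.comp_measurable (LinearMap.continuous_of_finiteDimensional _).measurable

lemma integral_comp_mulVec {n : ℕ} {B : Matrix (Fin n) (Fin n) ℝ} (hB : B.det ≠ 0)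
    {f : (Fin n → ℝ) → ℝ} (hf : Continuous f) :
    ∫ u, f (B *ᵥ u) = |B.det|⁻¹ * ∫ y, f y := by
  have h := integral_map (μ := (volume : Measure (Fin n → ℝ)))
    (LinearMap.continuous_of_finiteDimensional (Matrix.toLin' B)).measurable.aemeasurable
    hf.aestronglyMeasurable
  rw [Real.map_matrix_volume_pi_eq_smul_volume_pi hB, integral_smul_measure,
    ENNReal.toReal_ofReal (abs_nonneg _), abs_inv] at h
  exact h.symm

lemma integrable_gauss {n : ℕ} {P : Matrix (Fin n) (Fin n) ℝ} (hP : P.PosDef) :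
    Integrable (fun u : Fin n → ℝ => Real.exp (-(1 / 2) * (u ⬝ᵥ (P *ᵥ u)))) := by
  obtain ⟨B, hB, rfl⟩ := exists_factor hP
  simp only [quad_factor]
  exact integrable_comp_mulVec hB integrable_std

lemma integrable_gauss_smul {n : ℕ} {P : Matrix (Fin n) (Fin n) ℝ} (hP : P.PosDef) :
    Integrable (fun u : Fin n → ℝ => Real.exp (-(1 / 2) * (u ⬝ᵥ (P *ᵥ u))) • u) := by
  obtain ⟨B, hB, rfl⟩ := exists_factor hP
  simp only [quad_factor]
  have h := (LinearMap.toContinuousLinearMap (Matrix.toLin' B⁻¹)).integrable_comp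
    (integrable_comp_mulVec hB (integrable_std_smul (n := n)))
  refine h.congr (Filter.Eventually.of_forall fun u => ?_)
  simp [Matrix.mulVec_mulVec, Matrix.nonsing_inv_mul B (Ne.isUnit hB)]

lemma integral_gauss {n : ℕ} {P : Matrix (Fin n) (Fin n) ℝ} (hP : P.PosDef) :
    ∫ u : Fin n → ℝ, Real.exp (-(1 / 2) * (u ⬝ᵥ (P *ᵥ u)))
      = (2 * Real.pi) ^ ((n : ℝ) / 2) * P.det ^ (-(1 : ℝ) / 2) := by
  obtain ⟨B, hB, rfl⟩ := exists_factor hP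
  simp only [quad_factor]
  rw [integral_comp_mulVec hB (f := fun y => Real.exp (-(1 / 2) * (y ⬝ᵥ y))) (by fun_prop),
    integral_std, mul_comm, Matrix.det_mul, Matrix.det_transpose, neg_div,
    Real.rpow_neg (mul_self_nonneg _), ← Real.sqrt_eq_rpow, Real.sqrt_mul_self_eq_abs]

/-- The first moment of a centred Gaussian vanishes, the integrand being odd. -/
lemma integral_gauss_smul {n : ℕ} (P : Matrix (Fin n) (Fin n) ℝ) :
    ∫ u : Fin n → ℝ, Real.exp (-(1 / 2) * (u ⬝ᵥ (P *ᵥ u))) • u = 0 := by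
  have h := integral_neg_eq_self
    (fun u : Fin n → ℝ => Real.exp (-(1 / 2) * (u ⬝ᵥ (P *ᵥ u))) • u) volume
  simp only [Matrix.mulVec_neg, neg_dotProduct, dotProduct_neg, neg_neg, smul_neg,
    integral_neg] at h
  exact self_eq_neg.mp h.symm

lemma quad_complete {n : ℕ} {S : Matrix (Fin n) (Fin n) ℝ} (hS : S.PosDef) (u e : Fin n → ℝ) :
    (u + S *ᵥ e) ⬝ᵥ (S⁻¹ *ᵥ (u + S *ᵥ e))
      = u ⬝ᵥ (S⁻¹ *ᵥ u) + 2 * (u ⬝ᵥ e) + e ⬝ᵥ (S *ᵥ e) := by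
  have hu : IsUnit S.det := (Matrix.isUnit_iff_isUnit_det S).mp hS.isUnit
  have hT : Sᵀ = S := by
    simpa [Matrix.conjTranspose_eq_transpose_of_trivial] using hS.isHermitian.eq
  have h1 : S⁻¹ *ᵥ (S *ᵥ e) = e := by
    rw [Matrix.mulVec_mulVec, Matrix.nonsing_inv_mul S hu, Matrix.one_mulVec]
  have h2 : (S *ᵥ e) ⬝ᵥ (S⁻¹ *ᵥ u) = u ⬝ᵥ e := by
    have h3 : S *ᵥ e = e ᵥ* S := by
      conv_lhs => rw [← hT]
      exact Matrix.mulVec_transpose S e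
    rw [h3, ← Matrix.dotProduct_mulVec, Matrix.mulVec_mulVec, Matrix.mul_nonsing_inv S hu,
      Matrix.one_mulVec, dotProduct_comm]
  rw [Matrix.mulVec_add, h1, add_dotProduct, dotProduct_add, dotProduct_add, h2,
    dotProduct_comm (S *ᵥ e) e]
  ring

/-- After translating by the posterior mean `Sig (Λ + Sig)⁻¹ (a - μ) + μ`, kernel times density is
a constant multiple of a centred Gaussian of precision `Λ⁻¹ + Sig⁻¹`. -/
lemma kernel_mul_density_translate {n : ℕ} {Λ Sig : Matrix (Fin n) (Fin n) ℝ} (hΛ : Λ.PosDef)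
    (hSig : Sig.PosDef) (μ a u : Fin n → ℝ) :
    Real.exp (-(1 / 2) * ((u + ((Sig * (Λ + Sig)⁻¹) *ᵥ (a - μ) + μ) - a) ⬝ᵥ
        (Λ⁻¹ *ᵥ (u + ((Sig * (Λ + Sig)⁻¹) *ᵥ (a - μ) + μ) - a)))) *
      gaussDensity μ Sig (u + ((Sig * (Λ + Sig)⁻¹) *ᵥ (a - μ) + μ))
    = ((2 * Real.pi) ^ (-(n : ℝ) / 2) * Sig.det ^ (-(1 : ℝ) / 2) *
        Real.exp (-(1 / 2) * ((μ - a) ⬝ᵥ ((Λ + Sig)⁻¹ *ᵥ (μ - a))))) *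
      Real.exp (-(1 / 2) * (u ⬝ᵥ ((Λ⁻¹ + Sig⁻¹) *ᵥ u))) := by
  have hK : IsUnit (Λ + Sig).det := (Matrix.isUnit_iff_isUnit_det _).mp (hΛ.add hSig).isUnit
  obtain ⟨e, he⟩ : ∃ e, e = (Λ + Sig)⁻¹ *ᵥ (a - μ) := ⟨_, rfl⟩
  have hd : a - μ = Λ *ᵥ e + Sig *ᵥ e := by
    rw [he, ← Matrix.add_mulVec, Matrix.mulVec_mulVec, Matrix.mul_nonsing_inv _ hK,
      Matrix.one_mulVec]
  have hc : (Sig * (Λ + Sig)⁻¹) *ᵥ (a - μ) = Sig *ᵥ e := by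
    rw [he, Matrix.mulVec_mulVec]
  have hq : (μ - a) ⬝ᵥ ((Λ + Sig)⁻¹ *ᵥ (μ - a)) = e ⬝ᵥ (Λ *ᵥ e) + e ⬝ᵥ (Sig *ᵥ e) := by
    rw [← neg_sub a μ, Matrix.mulVec_neg, neg_dotProduct_neg, ← he, hd, add_dotProduct,
      dotProduct_comm e, dotProduct_comm e]
  have h1 : u + (Sig *ᵥ e + μ) - a = u + Λ *ᵥ (-e) := by
    rw [Matrix.mulVec_neg]
    have : a = Λ *ᵥ e + Sig *ᵥ e + μ := by rw [← hd]; abel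
    rw [this]; abel
  have h2 : u + (Sig *ᵥ e + μ) - μ = u + Sig *ᵥ e := by abel
  rw [gaussDensity, hc, h1, h2, hq, quad_complete hΛ, quad_complete hSig, mul_left_comm,
    ← Real.exp_add, mul_assoc _ (Real.exp _) (Real.exp _), ← Real.exp_add]
  congr 2
  rw [Matrix.add_mulVec, dotProduct_add, Matrix.mulVec_neg, neg_dotProduct_neg, dotProduct_neg]
  ring

/-- The cross-moment for a single kernel, together with the integrability that allows the sum over
inducing inputs to be pulled out of the integral. -/
lemma single_kernel {n : ℕ} {Λ Sig : Matrix (Fin n) (Fin n) ℝ} (hΛ : Λ.PosDef)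
    (hSig : Sig.PosDef) (μ a : Fin n → ℝ) :
    Integrable (fun w : Fin n → ℝ =>
      (Real.exp (-(1 / 2) * ((w - a) ⬝ᵥ (Λ⁻¹ *ᵥ (w - a)))) * gaussDensity μ Sig w) • (w - μ)) ∧
    ∫ w : Fin n → ℝ,
      (Real.exp (-(1 / 2) * ((w - a) ⬝ᵥ (Λ⁻¹ *ᵥ (w - a)))) * gaussDensity μ Sig w) • (w - μ)
      = ((Λ⁻¹ * Sig + 1).det ^ (-(1 : ℝ) / 2) *
          Real.exp (-(1 / 2) * ((μ - a) ⬝ᵥ ((Λ + Sig)⁻¹ *ᵥ (μ - a))))) •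
        ((Sig * (Λ + Sig)⁻¹) *ᵥ (a - μ)) := by
  set F : (Fin n → ℝ) → (Fin n → ℝ) := fun w =>
    (Real.exp (-(1 / 2) * ((w - a) ⬝ᵥ (Λ⁻¹ *ᵥ (w - a)))) * gaussDensity μ Sig w) • (w - μ) with hF
  set c := (Sig * (Λ + Sig)⁻¹) *ᵥ (a - μ) with hc
  set E := Real.exp (-(1 / 2) * ((μ - a) ⬝ᵥ ((Λ + Sig)⁻¹ *ᵥ (μ - a)))) with hE
  have hP : (Λ⁻¹ + Sig⁻¹).PosDef := hΛ.inv.add hSig.inv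
  have key : (fun u => F (u + (c + μ))) = fun u =>
      ((2 * Real.pi) ^ (-(n : ℝ) / 2) * Sig.det ^ (-(1 : ℝ) / 2) * E) •
        (Real.exp (-(1 / 2) * (u ⬝ᵥ ((Λ⁻¹ + Sig⁻¹) *ᵥ u))) • u +
          Real.exp (-(1 / 2) * (u ⬝ᵥ ((Λ⁻¹ + Sig⁻¹) *ᵥ u))) • c) := by
    funext u
    have h2 : u + (c + μ) - μ = u + c := by abel
    simp only [hF]
    rw [h2, hc, kernel_mul_density_translate hΛ hSig μ a u, mul_smul, smul_add]
  have i1 := integrable_gauss_smul hP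
  have i2 := (integrable_gauss hP).smul_const c
  have hint : Integrable (fun u => F (u + (c + μ))) := by
    rw [key]
    exact (i1.add i2).smul
      ((2 * Real.pi) ^ (-(n : ℝ) / 2) * Sig.det ^ (-(1 : ℝ) / 2) * E)
  refine ⟨by simpa using hint.comp_sub_right (c + μ), ?_⟩
  rw [← integral_add_right_eq_self F (c + μ), key, integral_smul, integral_add i1 i2,
    integral_gauss_smul, zero_add, integral_smul_const, integral_gauss hP, smul_smul]
  congr 1
  have hu : IsUnit Sig.det := (Matrix.isUnit_iff_isUnit_det _).mp hSig.isUnit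
  have hdet : (Λ⁻¹ * Sig + 1).det = (Λ⁻¹ + Sig⁻¹).det * Sig.det := by
    rw [← Matrix.det_mul, Matrix.add_mul, Matrix.nonsing_inv_mul _ hu]
  have hpi : (2 * Real.pi) ^ (-(n : ℝ) / 2) * (2 * Real.pi) ^ ((n : ℝ) / 2) = 1 := by
    rw [← Real.rpow_add (by positivity), neg_div, neg_add_cancel, Real.rpow_zero]
  rw [hdet, Real.mul_rpow hP.det_pos.le hSig.det_pos.le]
  linear_combination (Sig.det ^ (-(1 : ℝ) / 2) * E * (Λ⁻¹ + Sig⁻¹).det ^ (-(1 : ℝ) / 2)) * hpi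

/-- Input–output cross-covariance column of the sparse moment-matching prediction:
the vector-valued Gaussian cross-moment of the centered input with the sparse GP
predictive mean (a weighted sum of squared-exponential kernels). -/
theorem sparse_gp_mm_cross_covariance (n M : ℕ)
    (Λ Sig : Matrix (Fin n) (Fin n) ℝ) (hΛ : Λ.PosDef) (hSig : Sig.PosDef)
    (σ : ℝ) (hσ : 0 < σ) (μ : Fin n → ℝ)
    (wi : Fin M → Fin n → ℝ) (α : Fin M → ℝ) :
    (∫ w : Fin n → ℝ,
        ((∑ τ : Fin M,
          α τ * (σ ^ 2 * Real.exp (-(1 / 2) * ((w - wi τ) ⬝ᵥ (Λ⁻¹ *ᵥ (w - wi τ)))))) *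
          gaussDensity μ Sig w) • (w - μ))
      = ∑ τ : Fin M,
          (α τ * (σ ^ 2 * ((Λ⁻¹ * Sig + 1).det) ^ (-(1 : ℝ) / 2) *
            Real.exp (-(1 / 2) * ((μ - wi τ) ⬝ᵥ ((Λ + Sig)⁻¹ *ᵥ (μ - wi τ)))))) •
            ((Sig * (Λ + Sig)⁻¹) *ᵥ (wi τ - μ)) := by
  have hsum : ∀ w : Fin n → ℝ,
      ((∑ τ : Fin M,
          α τ * (σ ^ 2 * Real.exp (-(1 / 2) * ((w - wi τ) ⬝ᵥ (Λ⁻¹ *ᵥ (w - wi τ)))))) *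
          gaussDensity μ Sig w) • (w - μ)
      = ∑ τ : Fin M, (α τ * σ ^ 2) •
          ((Real.exp (-(1 / 2) * ((w - wi τ) ⬝ᵥ (Λ⁻¹ *ᵥ (w - wi τ)))) *
            gaussDensity μ Sig w) • (w - μ)) := by
    intro w
    rw [Finset.sum_mul, Finset.sum_smul]
    refine Finset.sum_congr rfl fun τ _ => ?_
    rw [smul_smul]
    congr 1
    ring
  simp only [hsum]
  rw [integral_finsetSum _ fun τ _ => by
    exact (single_kernel hΛ hSig μ (wi τ)).1.smul (α τ * σ ^ 2)]
  refine Finset.sum_congr rfl fun τ _ => ?_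
  rw [integral_smul, (single_kernel hΛ hSig μ (wi τ)).2, smul_smul]
  congr 1
  ring
end

section
/- Let Λ and Σ be symmetric positive definite n×n real matrices, σ > 0, μ ∈ ℝⁿ, inducing inputs w̆₁, …, w̆_M ∈ ℝⁿ, and α ∈ ℝᴹ. Define μ̆(w) = Σ_{τ=1}^M α_τ σ² exp(−(1/2)(w−w̆_τ)ᵀΛ⁻¹(w−w̆_τ)), let s : ℝⁿ → ℝ≥0 be any measurable function integrable against ρ_{μ,Σ}, let ν be the probability measure on ℝⁿ with Lebesgue density ρ_{μ,Σ}, and let η = ν.bind (w ↦ gaussianReal (μ̆(w)) (s(w))). Then ∫_ℝ z dη(z) = Σ_{τ=1}^M α_τ l_τ(μ, Σ), where l_τ(μ, Σ) = σ² det(Λ⁻¹Σ + I)^{−1/2} exp(−(1/2)(μ−w̆_τ)ᵀ(Λ+Σ)⁻¹(μ−w̆_τ)). -/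
/-!
A draw from the mixture `η` is `z = μ̆(w) + √(s w) * x` with `w ~ ν` and `x ~ N(0, 1)` independent
(`bind_gaussianReal_eq_map_prod`). Since `√s ≤ 1 + s` is `ν`-integrable and `μ̆` is bounded, both
terms are integrable; the second one has mean zero, so the mean of `η` is `∫ μ̆ dν`
(`integral_bind_gaussianReal`).

Each summand of `∫ μ̆ dν` is the integral of a product of two Gaussians in `w`. Completing the square
(`quadForm_add_quadForm`) with `P = Λ⁻¹ + Σ⁻¹` turns the exponent into a quadratic form with matrix
`P` around a shifted centre plus the constant `(μ - a)ᵀ (Λ + Σ)⁻¹ (μ - a)`, and the multivariate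
Gaussian integral (`integrable_and_integral_exp_quadForm`, obtained from the one-dimensional
one by the linear substitution `v = B w`, where `P = Bᵀ B`) gives the normalisation `det (Σ P) = det (Λ⁻¹ Σ + 1)`.
-/

open MeasureTheory ProbabilityTheory Matrix
open scoped Matrix NNReal

/-- A positive definite quadratic form is a sum of squares of independent linear forms. -/
lemma exists_quadForm_eq_sum_sq {n : ℕ} {P : Matrix (Fin n) (Fin n) ℝ} (hP : P.PosDef) :
    ∃ B : Matrix (Fin n) (Fin n) ℝ, B.det ≠ 0 ∧ P.det = B.det ^ 2 ∧
      ∀ u : Fin n → ℝ, u ⬝ᵥ (P *ᵥ u) = ∑ i, (B *ᵥ u) i ^ 2 := by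
  obtain ⟨B, hB⟩ : ∃ B : Matrix (Fin n) (Fin n) ℝ, P = Bᵀ * B := by
    open scoped MatrixOrder Matrix.Norms.L2Operator in
    obtain ⟨B, hB⟩ := CStarAlgebra.nonneg_iff_eq_star_mul_self.mp hP.posSemidef.nonneg
    exact ⟨B, by rw [hB, star_eq_conjTranspose, conjTranspose_eq_transpose_of_trivial]⟩
  have hdet : P.det = B.det ^ 2 := by rw [hB, det_mul, det_transpose, sq]
  refine ⟨B, fun h => ?_, hdet, fun u => ?_⟩
  · have := hP.det_pos
    simp [hdet, h] at this
  · rw [hB, ← mulVec_mulVec, dotProduct_mulVec, vecMul_transpose]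
    simp [dotProduct, sq]

lemma integrable_and_integral_exp_sum_sq (n : ℕ) :
    Integrable (fun v : Fin n → ℝ => Real.exp (-(1 / 2) * ∑ i, v i ^ 2)) ∧
      ∫ v : Fin n → ℝ, Real.exp (-(1 / 2) * ∑ i, v i ^ 2) = (2 * Real.pi) ^ ((n : ℝ) / 2) := by
  have hprod : (fun v : Fin n → ℝ => Real.exp (-(1 / 2) * ∑ i, v i ^ 2))
      = fun v => ∏ i, Real.exp (-(1 / 2) * v i ^ 2) := by
    ext v
    rw [Finset.mul_sum, Real.exp_sum]
  rw [hprod]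
  constructor
  · exact Integrable.fintype_prod (μ := fun _ : Fin n => (volume : Measure ℝ))
      (f := fun _ x => Real.exp (-(1 / 2) * x ^ 2))
      fun _ => integrable_exp_neg_mul_sq (by norm_num)
  · rw [integral_fintype_prod_volume_eq_prod (fun (_ : Fin n) (x : ℝ) => Real.exp (-(1 / 2) * x ^ 2)),
      integral_gaussian, Finset.prod_const, Finset.card_univ, Fintype.card_fin,
      show Real.pi / (1 / 2) = 2 * Real.pi by ring, Real.sqrt_eq_rpow, ← Real.rpow_natCast,
      ← Real.rpow_mul (by positivity)]
    congr 1
    ring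

lemma integrable_and_integral_exp_quadForm {n : ℕ} {P : Matrix (Fin n) (Fin n) ℝ} (hP : P.PosDef)
    (c : Fin n → ℝ) :
    Integrable (fun w : Fin n → ℝ => Real.exp (-(1 / 2) * ((w - c) ⬝ᵥ (P *ᵥ (w - c))))) ∧
      ∫ w : Fin n → ℝ, Real.exp (-(1 / 2) * ((w - c) ⬝ᵥ (P *ᵥ (w - c))))
        = (2 * Real.pi) ^ ((n : ℝ) / 2) * P.det ^ (-(1 : ℝ) / 2) := by
  obtain ⟨B, hB0, hdet, hq⟩ := exists_quadForm_eq_sum_sq hP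
  simp only [hq]
  obtain ⟨hint, hval⟩ := integrable_and_integral_exp_sum_sq n
  set g : (Fin n → ℝ) → ℝ := fun v => Real.exp (-(1 / 2) * ∑ i, v i ^ 2) with hg
  have hmap := Real.map_matrix_volume_pi_eq_smul_volume_pi hB0
  have hmeas : AEMeasurable (toLin' B) (volume : Measure (Fin n → ℝ)) :=
    (LinearMap.continuous_of_finiteDimensional _).aemeasurable
  have hgc : Continuous g := by fun_prop
  have hrpow : P.det ^ (-(1 : ℝ) / 2) = |B.det⁻¹| := by
    rw [hdet, ← sq_abs, ← Real.rpow_natCast, ← Real.rpow_mul (abs_nonneg _), abs_inv,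
      ← Real.rpow_neg_one]
    norm_num
  have h1 : Integrable (fun u : Fin n → ℝ => g (B *ᵥ u)) := by
    have h : Integrable g (Measure.map (toLin' B) volume) := by
      rw [hmap]
      exact hint.smul_measure ENNReal.ofReal_ne_top
    simpa [Function.comp_def] using h.comp_aemeasurable hmeas
  have h2 : ∫ u : Fin n → ℝ, g (B *ᵥ u) = (2 * Real.pi) ^ ((n : ℝ) / 2) * |B.det⁻¹| := by
    have h := integral_map hmeas (f := g) hgc.aestronglyMeasurable
    rw [hmap, integral_smul_measure, hval, ENNReal.toReal_ofReal (abs_nonneg _)] at h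
    simp only [toLin'_apply] at h
    rw [← h, smul_eq_mul, mul_comm]
  refine ⟨h1.comp_sub_right c, ?_⟩
  rw [hrpow, ← h2]
  exact integral_sub_right_eq_self (fun u => g (B *ᵥ u)) c

lemma gaussDensity_nonneg {n : ℕ} (μ : Fin n → ℝ) {S : Matrix (Fin n) (Fin n) ℝ} (hS : S.PosDef)
    (w : Fin n → ℝ) : 0 ≤ gaussDensity μ S w := by
  have := hS.det_pos
  unfold gaussDensity
  positivity

lemma continuous_gaussDensity {n : ℕ} (μ : Fin n → ℝ) (S : Matrix (Fin n) (Fin n) ℝ) :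
    Continuous (gaussDensity μ S) := by
  unfold gaussDensity
  fun_prop

lemma isProbabilityMeasure_withDensity_gaussDensity {n : ℕ} (μ : Fin n → ℝ)
    {S : Matrix (Fin n) (Fin n) ℝ} (hS : S.PosDef) :
    IsProbabilityMeasure (volume.withDensity fun w => ENNReal.ofReal (gaussDensity μ S w)) := by
  obtain ⟨hint, hval⟩ := integrable_and_integral_exp_quadForm hS.inv μ
  have hd := hS.det_pos
  have hint' : Integrable (gaussDensity μ S) := hint.const_mul _
  refine ⟨?_⟩
  rw [withDensity_apply _ MeasurableSet.univ, Measure.restrict_univ,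
    ← ofReal_integral_eq_lintegral_ofReal hint'
    (ae_of_all _ (gaussDensity_nonneg μ hS))]
  unfold gaussDensity
  rw [integral_const_mul, hval, det_nonsing_inv, Ring.inverse_eq_inv', Real.inv_rpow hd.le]
  have h1 : (S.det ^ (-(1 : ℝ) / 2)) ≠ 0 := by positivity
  rw [show -(n : ℝ) / 2 = -((n : ℝ) / 2) by ring, Real.rpow_neg (by positivity)]
  have h2 : (2 * Real.pi) ^ ((n : ℝ) / 2) ≠ 0 := by positivity
  rw [ENNReal.ofReal_eq_one]
  field_simp

/-- `Λ⁻¹ + Σ⁻¹ = Λ⁻¹ (Λ + Σ) Σ⁻¹`. -/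
lemma inv_add_inv_eq_mul {n : ℕ} {Λ S : Matrix (Fin n) (Fin n) ℝ} (hΛ : Λ.PosDef) (hS : S.PosDef) :
    Λ⁻¹ + S⁻¹ = Λ⁻¹ * (Λ + S) * S⁻¹ := by
  have h1 : Λ⁻¹ * Λ = 1 := nonsing_inv_mul _ hΛ.det_pos.ne'.isUnit
  have h2 : S * S⁻¹ = 1 := mul_nonsing_inv _ hS.det_pos.ne'.isUnit
  rw [mul_add, add_mul, h1, mul_assoc, h2, one_mul, mul_one, add_comm]

/-- The Woodbury-type identity behind the constant term of the completed square. -/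
lemma inv_sub_inv_mul_inv_mul_inv {n : ℕ} {Λ S : Matrix (Fin n) (Fin n) ℝ}
    (hΛ : Λ.PosDef) (hS : S.PosDef) :
    Λ⁻¹ - Λ⁻¹ * (Λ⁻¹ + S⁻¹)⁻¹ * Λ⁻¹ = (Λ + S)⁻¹ := by
  have h1 : Λ * Λ⁻¹ = 1 := mul_nonsing_inv _ hΛ.det_pos.ne'.isUnit
  have h1' : Λ⁻¹ * Λ = 1 := nonsing_inv_mul _ hΛ.det_pos.ne'.isUnit
  have h3 : (Λ + S) * (Λ + S)⁻¹ = 1 := mul_nonsing_inv _ (hΛ.add hS).det_pos.ne'.isUnit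
  rw [inv_add_inv_eq_mul hΛ hS, Matrix.mul_inv_rev, Matrix.mul_inv_rev,
    nonsing_inv_nonsing_inv _ hΛ.det_pos.ne'.isUnit, nonsing_inv_nonsing_inv _ hS.det_pos.ne'.isUnit]
  calc Λ⁻¹ - Λ⁻¹ * (S * ((Λ + S)⁻¹ * Λ)) * Λ⁻¹
      = Λ⁻¹ * ((Λ + S) * (Λ + S)⁻¹) - Λ⁻¹ * S * (Λ + S)⁻¹ * (Λ * Λ⁻¹) := by
        rw [h3]; noncomm_ring
    _ = Λ⁻¹ * Λ * (Λ + S)⁻¹ := by rw [h1]; noncomm_ring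
    _ = (Λ + S)⁻¹ := by rw [h1', one_mul]

/-- Completing the square in the product of two Gaussians. -/
lemma quadForm_add_quadForm {n : ℕ} {Λ S : Matrix (Fin n) (Fin n) ℝ}
    (hΛ : Λ.PosDef) (hS : S.PosDef) (a μ : Fin n → ℝ) :
    ∃ c : Fin n → ℝ, ∀ w : Fin n → ℝ,
      (w - a) ⬝ᵥ (Λ⁻¹ *ᵥ (w - a)) + (w - μ) ⬝ᵥ (S⁻¹ *ᵥ (w - μ))
        = (w - c) ⬝ᵥ ((Λ⁻¹ + S⁻¹) *ᵥ (w - c)) + (μ - a) ⬝ᵥ ((Λ + S)⁻¹ *ᵥ (μ - a)) := by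
  set P := Λ⁻¹ + S⁻¹ with hPdef
  have hP : P.PosDef := hΛ.inv.add hS.inv
  have hPP : P * P⁻¹ = 1 := mul_nonsing_inv _ hP.det_pos.ne'.isUnit
  have hsymm : ∀ {A : Matrix (Fin n) (Fin n) ℝ}, A.PosDef → ∀ x y : Fin n → ℝ,
      x ⬝ᵥ (A *ᵥ y) = y ⬝ᵥ (A *ᵥ x) := by
    intro A hA x y
    have hAt : Aᵀ = A := by simpa [conjTranspose_eq_transpose_of_trivial] using hA.isHermitian.eq
    rw [dotProduct_mulVec, dotProduct_comm, ← mulVec_transpose, hAt]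
  -- The new centre is `μ + P⁻¹ Λ⁻¹ (a - μ)`; below, `e` is its offset from `μ`.
  set d := a - μ with hd
  set e := P⁻¹ *ᵥ (Λ⁻¹ *ᵥ d) with he
  have hPe : P *ᵥ e = Λ⁻¹ *ᵥ d := by rw [he, mulVec_mulVec, hPP, one_mulVec]
  refine ⟨μ + e, fun w => ?_⟩
  set u := w - μ with hu
  have hwa : w - a = u - d := by rw [hu, hd]; abel
  have hwc : w - (μ + e) = u - e := by rw [hu]; abel
  have hma : μ - a = -d := by rw [hd]; abel
  have hconst : d ⬝ᵥ ((Λ + S)⁻¹ *ᵥ d) = d ⬝ᵥ (Λ⁻¹ *ᵥ d) - e ⬝ᵥ (Λ⁻¹ *ᵥ d) := by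
    rw [← inv_sub_inv_mul_inv_mul_inv hΛ hS, sub_mulVec, dotProduct_sub, ← mulVec_mulVec,
      ← mulVec_mulVec, ← hPdef, ← he, hsymm hΛ.inv d e]
  rw [hwa, hwc, hma, mulVec_neg, neg_dotProduct_neg, hconst, mulVec_sub P, hPe]
  have hPu : P *ᵥ u = Λ⁻¹ *ᵥ u + S⁻¹ *ᵥ u := by rw [hPdef, add_mulVec]
  have heu : e ⬝ᵥ (P *ᵥ u) = u ⬝ᵥ (Λ⁻¹ *ᵥ d) := by rw [hsymm hP, hPe]
  simp only [mulVec_sub, sub_dotProduct, dotProduct_sub]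
  rw [heu, hPu, dotProduct_add, hsymm hΛ.inv d u]
  ring

/-- The Gaussian expectation of a squared-exponential kernel. -/
lemma integral_gaussDensity_mul_exp {n : ℕ} {Λ S : Matrix (Fin n) (Fin n) ℝ}
    (hΛ : Λ.PosDef) (hS : S.PosDef) (a μ : Fin n → ℝ) :
    ∫ w, gaussDensity μ S w * Real.exp (-(1 / 2) * ((w - a) ⬝ᵥ (Λ⁻¹ *ᵥ (w - a))))
      = (Λ⁻¹ * S + 1).det ^ (-(1 : ℝ) / 2) *
        Real.exp (-(1 / 2) * ((μ - a) ⬝ᵥ ((Λ + S)⁻¹ *ᵥ (μ - a)))) := by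
  obtain ⟨c, hc⟩ := quadForm_add_quadForm hΛ hS a μ
  have hP : (Λ⁻¹ + S⁻¹).PosDef := hΛ.inv.add hS.inv
  have hfun : ∀ w, gaussDensity μ S w * Real.exp (-(1 / 2) * ((w - a) ⬝ᵥ (Λ⁻¹ *ᵥ (w - a))))
      = ((2 * Real.pi) ^ (-(n : ℝ) / 2) * S.det ^ (-(1 : ℝ) / 2) *
        Real.exp (-(1 / 2) * ((μ - a) ⬝ᵥ ((Λ + S)⁻¹ *ᵥ (μ - a))))) *
        Real.exp (-(1 / 2) * ((w - c) ⬝ᵥ ((Λ⁻¹ + S⁻¹) *ᵥ (w - c)))) := by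
    intro w
    unfold gaussDensity
    rw [mul_assoc, ← Real.exp_add, mul_assoc _ (Real.exp _), ← Real.exp_add, ← mul_add, ← mul_add,
      add_comm ((w - μ) ⬝ᵥ _), hc w, add_comm ((w - c) ⬝ᵥ _)]
  have hdet : (Λ⁻¹ * S + 1).det = S.det * (Λ⁻¹ + S⁻¹).det := by
    rw [← det_mul, mul_add, mul_nonsing_inv _ hS.det_pos.ne'.isUnit, add_comm, add_comm _ 1,
      det_one_add_mul_comm]
  have hpi : (2 * Real.pi) ^ (-(n : ℝ) / 2) * (2 * Real.pi) ^ ((n : ℝ) / 2) = 1 := by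
    rw [← Real.rpow_add (by positivity)]
    ring_nf
    exact Real.rpow_zero _
  simp_rw [hfun]
  rw [integral_const_mul, (integrable_and_integral_exp_quadForm hP c).2, hdet,
    Real.mul_rpow hS.det_pos.le hP.det_pos.le]
  linear_combination (S.det ^ (-(1 : ℝ) / 2) * (Λ⁻¹ + S⁻¹).det ^ (-(1 : ℝ) / 2) *
    Real.exp (-(1 / 2) * ((μ - a) ⬝ᵥ ((Λ + S)⁻¹ *ᵥ (μ - a))))) * hpi

lemma gaussianReal_eq_map_standard (m : ℝ) (v : ℝ≥0) :
    gaussianReal m v = (gaussianReal 0 1).map fun x => m + √(v : ℝ) * x := by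
  have h : (fun x : ℝ => m + √(v : ℝ) * x) = (fun y => m + y) ∘ fun x => √(v : ℝ) * x := rfl
  rw [h, ← Measure.map_map (by fun_prop) (by fun_prop), gaussianReal_map_const_mul,
    gaussianReal_map_const_add]
  congr 1
  · simp
  · ext
    simp

/-- A Gaussian mixture is the law of `m w + √(s w) * x` for independent `w ~ ν`, `x ~ N(0, 1)`. -/
lemma bind_gaussianReal_eq_map_prod {Ω : Type*} [MeasurableSpace Ω] (ν : Measure Ω) [SFinite ν]
    {m : Ω → ℝ} {s : Ω → ℝ≥0} (hm : Measurable m) (hs : Measurable s) :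
    (ν.bind fun w => gaussianReal (m w) (s w))
      = (ν.prod (gaussianReal 0 1)).map fun p => m p.1 + √(s p.1 : ℝ) * p.2 := by
  have hF : Measurable fun p : Ω × ℝ => m p.1 + √(s p.1 : ℝ) * p.2 := by fun_prop
  have happ : ∀ (w : Ω) (A : Set ℝ), MeasurableSet A → gaussianReal (m w) (s w) A
      = gaussianReal 0 1 (Prod.mk w ⁻¹' ((fun p : Ω × ℝ => m p.1 + √(s p.1 : ℝ) * p.2) ⁻¹' A)) := by
    intro w A hA
    rw [gaussianReal_eq_map_standard, Measure.map_apply (by fun_prop) hA]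
    rfl
  have hκ : Measurable fun w => gaussianReal (m w) (s w) := by
    refine Measure.measurable_of_measurable_coe _ fun A hA => ?_
    simp_rw [happ _ A hA]
    exact measurable_measure_prodMk_left (hF hA)
  ext A hA
  rw [Measure.bind_apply hA hκ.aemeasurable, Measure.map_apply hF hA, Measure.prod_apply (hF hA)]
  simp_rw [happ _ A hA]

lemma integral_bind_gaussianReal {Ω : Type*} [MeasurableSpace Ω] (ν : Measure Ω)
    [IsProbabilityMeasure ν] {m : Ω → ℝ} {s : Ω → ℝ≥0} (hm : Measurable m) (hs : Measurable s)
    (hmi : Integrable m ν) (hsi : Integrable (fun w => (s w : ℝ)) ν) :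
    ∫ z, z ∂(ν.bind fun w => gaussianReal (m w) (s w)) = ∫ w, m w ∂ν := by
  have hsqrt : Integrable (fun w => √(s w : ℝ)) ν := by
    refine ((integrable_const (1 : ℝ)).add hsi).mono' (by fun_prop) (ae_of_all _ fun w => ?_)
    have h0 : (0 : ℝ) ≤ s w := (s w).2
    rw [Real.norm_of_nonneg (Real.sqrt_nonneg _)]
    simp only [Pi.add_apply]
    nlinarith [Real.sq_sqrt h0, sq_nonneg (√(s w : ℝ) - 1), Real.sqrt_nonneg (s w : ℝ)]
  have hid : Integrable (fun x : ℝ => x) (gaussianReal 0 1) := by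
    have h := memLp_id_gaussianReal (μ := 0) (v := 1) 1
    exact memLp_one_iff_integrable.mp (by simpa [Function.id_def] using h)
  rw [bind_gaussianReal_eq_map_prod ν hm hs, integral_map (by fun_prop) (by fun_prop),
    integral_add (hmi.comp_fst _) (hsqrt.mul_prod hid),
    integral_prod_mul (fun w => √(s w : ℝ)) fun x : ℝ => x,
    integral_id_gaussianReal, mul_zero, add_zero, integral_fun_fst]
  simp

/-- Full moment-matching mean of a sparse GP prediction: the mean of the marginal
distribution of the GP output (conditionally Gaussian with mean `μ̆(w)` and variance
`s(w)`) under the Gaussian input `w ~ N(μ, Σ)`. -/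
theorem sparse_gp_mm_mean_mixture (n M : ℕ)
    (Λ Sig : Matrix (Fin n) (Fin n) ℝ) (hΛ : Λ.PosDef) (hSig : Sig.PosDef)
    (σ : ℝ) (hσ : 0 < σ) (μ : Fin n → ℝ)
    (wi : Fin M → Fin n → ℝ) (α : Fin M → ℝ)
    (s : (Fin n → ℝ) → ℝ≥0) (hs : Measurable s)
    (ν : Measure (Fin n → ℝ))
    (hν : ν = volume.withDensity fun w => ENNReal.ofReal (gaussDensity μ Sig w))
    (hsInt : Integrable (fun w => (s w : ℝ)) ν) :
    (∫ z, z ∂(ν.bind fun w =>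
        gaussianReal
          (∑ τ : Fin M,
            α τ * (σ ^ 2 * Real.exp (-(1 / 2) * ((w - wi τ) ⬝ᵥ (Λ⁻¹ *ᵥ (w - wi τ))))))
          (s w)))
      = ∑ τ : Fin M,
          α τ * (σ ^ 2 * ((Λ⁻¹ * Sig + 1).det) ^ (-(1 : ℝ) / 2) *
            Real.exp (-(1 / 2) * ((μ - wi τ) ⬝ᵥ ((Λ + Sig)⁻¹ *ᵥ (μ - wi τ))))) := by
  have : IsProbabilityMeasure ν := hν ▸ isProbabilityMeasure_withDensity_gaussDensity μ hSig
  have hker : ∀ τ, Integrable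
      (fun w => Real.exp (-(1 / 2) * ((w - wi τ) ⬝ᵥ (Λ⁻¹ *ᵥ (w - wi τ))))) ν := by
    intro τ
    refine (integrable_const (1 : ℝ)).mono' (by fun_prop) (ae_of_all _ fun w => ?_)
    have h := hΛ.inv.posSemidef.dotProduct_mulVec_nonneg (w - wi τ)
    rw [star_trivial] at h
    rw [Real.norm_of_nonneg (Real.exp_pos _).le, Real.exp_le_one_iff]
    linarith
  have hterm : ∀ τ, Integrable (fun w =>
      α τ * (σ ^ 2 * Real.exp (-(1 / 2) * ((w - wi τ) ⬝ᵥ (Λ⁻¹ *ᵥ (w - wi τ)))))) ν :=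
    fun τ => ((hker τ).const_mul _).const_mul _
  rw [integral_bind_gaussianReal ν (by fun_prop) hs (integrable_finsetSum _ fun τ _ => hterm τ)
    hsInt, integral_finsetSum _ fun τ _ => hterm τ]
  refine Finset.sum_congr rfl fun τ _ => ?_
  rw [integral_const_mul, integral_const_mul, hν, integral_withDensity_eq_integral_toReal_smul
    (continuous_gaussDensity μ Sig).measurable.ennreal_ofReal (ae_of_all _ fun _ => by simp)]
  simp_rw [ENNReal.toReal_ofReal (gaussDensity_nonneg μ hSig _), smul_eq_mul]
  rw [integral_gaussDensity_mul_exp hΛ hSig, mul_assoc (σ ^ 2)]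
end

section
/- Let Λᵢ, Λⱼ, and Σ be symmetric positive definite n×n real matrices, σᵢ, σⱼ > 0, μ ∈ ℝⁿ, inducing inputs w̆₁, …, w̆_M ∈ ℝⁿ, and weight vectors a, b ∈ ℝᴹ. Define μ̆ᵢ(w) = Σ_{τ=1}^M a_τ σᵢ² exp(−(1/2)(w−w̆_τ)ᵀΛᵢ⁻¹(w−w̆_τ)) and μ̆ⱼ(w) = Σ_{τ̃=1}^M b_{τ̃} σⱼ² exp(−(1/2)(w−w̆_{τ̃})ᵀΛⱼ⁻¹(w−w̆_{τ̃})), and let sᵢ, sⱼ : ℝⁿ → ℝ≥0 be measurable functions integrable against ρ_{μ,Σ}. Let ν be the probability measure on ℝⁿ with Lebesgue density ρ_{μ,Σ}, and let η be the measure on ℝ² given by η = ν.bind (w ↦ (gaussianReal (μ̆ᵢ(w)) (sᵢ(w))) ×ₘ (gaussianReal (μ̆ⱼ(w)) (sⱼ(w)))). Then the covariance of the two coordinates under η satisfies ∫ z₁z₂ dη − (∫ z₁ dη)(∫ z₂ dη) = aᵀ L b − (aᵀ lᵢ)(bᵀ lⱼ), where lᵢ, lⱼ ∈ ℝᴹ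 have entries (lᵢ)_τ = σᵢ² det(Λᵢ⁻¹Σ + I)^{−1/2} exp(−(1/2)(μ−w̆_τ)ᵀ(Λᵢ+Σ)⁻¹(μ−w̆_τ)) (and analogously for lⱼ with Λⱼ, σⱼ), and L has entries [L]_{τ,τ̃} = σᵢ²σⱼ² det((Λᵢ⁻¹+Λⱼ⁻¹)Σ + I)^{−1/2} exp(−(1/2)(w̆_τ−w̆_{τ̃})ᵀ(Λᵢ+Λⱼ)⁻¹(w̆_τ−w̆_{τ̃})) exp(−(1/2)(q_{τ,τ̃}−μ)ᵀF⁻¹(q_{τ,τ̃}−μ)) with q_{τ,τ̃} = Λⱼ(Λᵢ+Λⱼ)⁻¹w̆_τ + Λᵢ(Λᵢ+Λⱼ)⁻¹w̆_{τ̃} and F = (Λᵢ⁻¹+Λⱼ⁻¹)⁻¹ + Σ. -/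
/-!
Conditionally on the input `w` the outputs are independent Gaussians, so by the law of total
expectation (`mixture_moments`) the first moments of the outputs and their mixed moment are the
integrals of the predictive means and of their product against `N(μ, Σ)`. The integrability this
needs follows from the predictive means being bounded and the predictive variances being integrable.

The predictive means are finite sums of Gaussian bumps. A product of two bumps is again a constant
times a bump (`rbf_mul_rbf`), and the expectation of a single bump under `N(μ, Σ)` has a closed form
(`integral_rbf`). Both facts come from completing the square (`quad_complete_square`), the second
one combined with the multivariate Gaussian integral (`gauss_integral`). Summing over the inducing
inputs yields `aᵀ lᵢ`, `bᵀ lⱼ` and `aᵀ L b`.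
-/

open MeasureTheory ProbabilityTheory Matrix
open scoped Matrix NNReal

/-! ### Completing the square and the Gaussian integral -/

/-- Completing the square for a sum of two quadratic forms with precision matrices `P`, `Q`: the
minimiser `c` solves `(P + Q) c = P u + Q v`, and the minimum is the quadratic form of the parallel
sum `(P⁻¹ + Q⁻¹)⁻¹` at `u - v`. -/
lemma quad_complete_square {n : ℕ} {P Q : Matrix (Fin n) (Fin n) ℝ}
    (hP : P.PosDef) (hQ : Q.PosDef) {u v c : Fin n → ℝ}
    (hc : (P + Q) *ᵥ c = P *ᵥ u + Q *ᵥ v) (w : Fin n → ℝ) :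
    (w - u) ⬝ᵥ (P *ᵥ (w - u)) + (w - v) ⬝ᵥ (Q *ᵥ (w - v)) =
      (w - c) ⬝ᵥ ((P + Q) *ᵥ (w - c)) +
        (u - v) ⬝ᵥ ((P⁻¹ + Q⁻¹)⁻¹ *ᵥ (u - v)) := by
  obtain ⟨x, hx⟩ : ∃ x, x = w - c := ⟨_, rfl⟩
  obtain ⟨d, hd⟩ : ∃ d, d = c - u := ⟨_, rfl⟩
  obtain ⟨e, he⟩ : ∃ e, e = c - v := ⟨_, rfl⟩
  have hPt : Pᵀ = P := by simpa using hP.isHermitian.eq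
  have hQt : Qᵀ = Q := by simpa using hQ.isHermitian.eq
  have hPu : IsUnit P.det := hP.det_pos.ne'.isUnit
  have hQu : IsUnit Q.det := hQ.det_pos.ne'.isUnit
  have hRu : IsUnit (P⁻¹ + Q⁻¹).det := (hP.inv.add hQ.inv).det_pos.ne'.isUnit
  -- The choice of `c` makes the linear terms cancel.
  have hde : Q *ᵥ e = -(P *ᵥ d) := by
    rw [eq_neg_iff_add_eq_zero, hd, he, mulVec_sub, mulVec_sub]
    rw [add_mulVec] at hc
    linear_combination hc
  have hdiff : (P⁻¹ + Q⁻¹) *ᵥ (P *ᵥ d) = d - e := by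
    have h1 : P⁻¹ *ᵥ (P *ᵥ d) = d := by rw [mulVec_mulVec, nonsing_inv_mul _ hPu, one_mulVec]
    have h2 : Q⁻¹ *ᵥ (Q *ᵥ e) = e := by rw [mulVec_mulVec, nonsing_inv_mul _ hQu, one_mulVec]
    rw [hde, mulVec_neg] at h2
    rw [add_mulVec, h1]
    linear_combination -h2
  have hR : (P⁻¹ + Q⁻¹)⁻¹ *ᵥ (d - e) = P *ᵥ d := by
    rw [← hdiff, mulVec_mulVec, nonsing_inv_mul _ hRu, one_mulVec]
  have huv : u - v = -(d - e) := by rw [hd, he]; abel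
  have hwu : w - u = x + d := by rw [hx, hd]; abel
  have hwv : w - v = x + e := by rw [hx, he]; abel
  have hsP : d ⬝ᵥ (P *ᵥ x) = x ⬝ᵥ (P *ᵥ d) := by
    rw [dotProduct_mulVec, ← mulVec_transpose, hPt, dotProduct_comm]
  have hsQ : e ⬝ᵥ (Q *ᵥ x) = x ⬝ᵥ (Q *ᵥ e) := by
    rw [dotProduct_mulVec, ← mulVec_transpose, hQt, dotProduct_comm]
  rw [huv, hwu, hwv, ← hx, mulVec_neg, hR]
  simp only [mulVec_add, add_mulVec, add_dotProduct, dotProduct_add, hsP, hsQ, hde,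
    dotProduct_neg, neg_dotProduct, sub_dotProduct]
  ring

/-- The `n`-dimensional Gaussian integral with precision matrix `A`. Writing `A = Bᵀ B`, the linear
substitution `x = B (w - c)` turns the integrand into a product of one-dimensional Gaussians. -/
lemma gauss_integral {n : ℕ} {A : Matrix (Fin n) (Fin n) ℝ} (hA : A.PosDef) (c : Fin n → ℝ) :
    Integrable (fun w : Fin n → ℝ => Real.exp (-(1 / 2) * ((w - c) ⬝ᵥ (A *ᵥ (w - c))))) ∧
    ∫ w : Fin n → ℝ, Real.exp (-(1 / 2) * ((w - c) ⬝ᵥ (A *ᵥ (w - c)))) =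
      (2 * Real.pi) ^ ((n : ℝ) / 2) * A.det ^ (-(1 : ℝ) / 2) := by
  classical
  obtain ⟨B, hB⟩ : ∃ B : Matrix (Fin n) (Fin n) ℝ, A = Bᵀ * B := by
    open scoped MatrixOrder in
    obtain ⟨B, hB⟩ := CStarAlgebra.nonneg_iff_eq_star_mul_self.mp hA.posSemidef.nonneg
    exact ⟨B, by simpa [star_eq_conjTranspose] using hB⟩
  have hdet : A.det = B.det ^ 2 := by rw [hB, det_mul, det_transpose, sq]
  have hB0 : B.det ≠ 0 := by
    intro h
    have := hA.det_pos
    simp [hdet, h] at this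
  let g : (Fin n → ℝ) → ℝ := fun x => ∏ i, Real.exp (-(1 / 2) * (x i) ^ 2)
  have hg : Integrable g := by
    refine Integrable.fintype_prod (f := fun _ (t : ℝ) => Real.exp (-(1 / 2) * t ^ 2)) fun _ => ?_
    exact integrable_exp_neg_mul_sq (by norm_num)
  have hgint : ∫ x, g x = (2 * Real.pi) ^ ((n : ℝ) / 2) := by
    have := integral_fintype_prod_volume_eq_pow (ι := Fin n)
      (fun t : ℝ => Real.exp (-(1 / 2) * t ^ 2))
    simp only [g]
    rw [this, integral_gaussian, Fintype.card_fin, Real.sqrt_eq_rpow, ← Real.rpow_natCast,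
      ← Real.rpow_mul (by positivity)]
    congr 1 <;> ring
  have hfg : ∀ w : Fin n → ℝ,
      Real.exp (-(1 / 2) * (w ⬝ᵥ (A *ᵥ w))) = g (toLin' B w) := by
    intro w
    simp only [g]
    rw [← Real.exp_sum, ← Finset.mul_sum, hB, ← mulVec_mulVec, dotProduct_mulVec,
      vecMul_transpose, toLin'_apply]
    simp only [dotProduct, sq]
  have hmeas : Measurable (toLin' B) := (toLin' B).continuous_of_finiteDimensional.measurable
  have hmap := Real.map_matrix_volume_pi_eq_smul_volume_pi hB0
  have hg' : Integrable g (Measure.map (toLin' B) volume) := by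
    rw [hmap]; exact hg.smul_measure (by simp)
  have hI : Integrable fun w : Fin n → ℝ => Real.exp (-(1 / 2) * (w ⬝ᵥ (A *ᵥ w))) := by
    simp_rw [hfg]
    exact hg'.comp_measurable hmeas
  refine ⟨hI.comp_sub_right c, ?_⟩
  rw [integral_sub_right_eq_self (fun w : Fin n → ℝ => Real.exp (-(1 / 2) * (w ⬝ᵥ (A *ᵥ w)))) c]
  simp_rw [hfg]
  rw [← integral_map hmeas.aemeasurable hg'.aestronglyMeasurable, hmap, integral_smul_measure,
    hgint, hdet, ENNReal.toReal_ofReal (abs_nonneg _), smul_eq_mul, mul_comm, ← sq_abs,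
    ← Real.rpow_natCast, ← Real.rpow_mul (abs_nonneg _), abs_inv, ← Real.rpow_neg_one]
  norm_num

/-! ### Moments of a Gaussian mixture -/

lemma gaussianReal_integral_sq (m : ℝ) (v : ℝ≥0) :
    ∫ x, x ^ 2 ∂(gaussianReal m v) = m ^ 2 + v := by
  have h := variance_eq_sub (memLp_id_gaussianReal (μ := m) (v := v) 2)
  rw [variance_id_gaussianReal] at h
  simp only [id, Pi.pow_apply, integral_id_gaussianReal] at h
  linarith

/-- Law of total expectation for the mixture of products of real Gaussians. Under the stated
second-moment conditions the coordinates and their product are integrable against the mixture, so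
none of the integrals on the left takes the default value of a non-integrable function. -/
lemma mixture_moments {α : Type*} [MeasurableSpace α] (ν : Measure α) [IsFiniteMeasure ν]
    {m₁ m₂ : α → ℝ} {s₁ s₂ : α → ℝ≥0} (hm₁ : Measurable m₁) (hm₂ : Measurable m₂)
    (hs₁ : Measurable s₁) (hs₂ : Measurable s₂)
    (im₁ : Integrable (fun w => m₁ w ^ 2) ν) (im₂ : Integrable (fun w => m₂ w ^ 2) ν)
    (is₁ : Integrable (fun w => (s₁ w : ℝ)) ν) (is₂ : Integrable (fun w => (s₂ w : ℝ)) ν)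
    {η : Measure (ℝ × ℝ)}
    (hη : η = ν.bind fun w => (gaussianReal (m₁ w) (s₁ w)).prod (gaussianReal (m₂ w) (s₂ w))) :
    ∫ z, z.1 * z.2 ∂η = ∫ w, m₁ w * m₂ w ∂ν ∧ ∫ z, z.1 ∂η = ∫ w, m₁ w ∂ν ∧
      ∫ z, z.2 ∂η = ∫ w, m₂ w ∂ν := by
  let κ₁ : Kernel α ℝ := ⟨fun w => gaussianReal (m₁ w) (s₁ w),
    measurable_gaussianReal.comp (hm₁.prodMk hs₁)⟩
  let κ₂ : Kernel α ℝ := ⟨fun w => gaussianReal (m₂ w) (s₂ w),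
    measurable_gaussianReal.comp (hm₂.prodMk hs₂)⟩
  have : IsMarkovKernel κ₁ :=
    ⟨fun w => inferInstanceAs (IsProbabilityMeasure (gaussianReal (m₁ w) (s₁ w)))⟩
  have : IsMarkovKernel κ₂ :=
    ⟨fun w => inferInstanceAs (IsProbabilityMeasure (gaussianReal (m₂ w) (s₂ w)))⟩
  let κ : Kernel α (ℝ × ℝ) := κ₁ ×ₖ κ₂
  have hκ : ∀ w, κ w = (gaussianReal (m₁ w) (s₁ w)).prod (gaussianReal (m₂ w) (s₂ w)) :=
    fun w => Kernel.prod_apply _ _ _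
  have hηκ : η = ν.bind κ := by rw [hη]; congr 1; funext w; exact (hκ w).symm
  have hfin : IsFiniteMeasure η := by rw [hηκ]; infer_instance
  have isq : ∀ m v, Integrable (fun x : ℝ => x ^ 2) (gaussianReal m v) := fun m v =>
    (memLp_id_gaussianReal (μ := m) (v := v) 2).integrable_sq
  have hsq : Integrable (fun z : ℝ × ℝ => z.1 ^ 2 + z.2 ^ 2) η := by
    rw [hηκ, Measure.integrable_comp_iff (by fun_prop)]
    have h1 : ∀ w, Integrable (fun z : ℝ × ℝ => z.1 ^ 2) (κ w) := fun w => by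
      rw [hκ]; exact (isq _ _).comp_fst _
    have h2 : ∀ w, Integrable (fun z : ℝ × ℝ => z.2 ^ 2) (κ w) := fun w => by
      rw [hκ]; exact (isq _ _).comp_snd _
    refine ⟨Filter.Eventually.of_forall fun w => (h1 w).add (h2 w), ?_⟩
    have : (fun w => ∫ z : ℝ × ℝ, ‖z.1 ^ 2 + z.2 ^ 2‖ ∂(κ w)) =
        fun w => (m₁ w ^ 2 + s₁ w) + (m₂ w ^ 2 + s₂ w) := by
      funext w
      simp_rw [Real.norm_of_nonneg (add_nonneg (sq_nonneg _) (sq_nonneg _))]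
      rw [integral_add (h1 w) (h2 w), hκ, integral_fun_fst (fun x : ℝ => x ^ 2),
        integral_fun_snd (fun x : ℝ => x ^ 2), gaussianReal_integral_sq, gaussianReal_integral_sq]
      simp
    rw [this]
    exact (im₁.add is₁).add (im₂.add is₂)
  -- `|z₁ z₂| ≤ z₁² + z₂²` and `|zₖ| ≤ 1 + z₁² + z₂²` reduce everything to second moments.
  have i12 : Integrable (fun z : ℝ × ℝ => z.1 * z.2) η := by
    refine hsq.mono' (by fun_prop) (Filter.Eventually.of_forall fun z => ?_)
    rw [Real.norm_eq_abs, abs_le]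
    constructor <;> nlinarith [sq_nonneg (z.1 + z.2), sq_nonneg (z.1 - z.2)]
  have i1 : Integrable (fun z : ℝ × ℝ => z.1) η := by
    refine ((integrable_const (1 : ℝ)).add hsq).mono' (by fun_prop)
      (Filter.Eventually.of_forall fun z => ?_)
    rw [Real.norm_eq_abs, abs_le, Pi.add_apply]
    constructor <;> nlinarith [sq_nonneg (z.1 + 1), sq_nonneg (z.1 - 1), sq_nonneg z.2]
  have i2 : Integrable (fun z : ℝ × ℝ => z.2) η := by
    refine ((integrable_const (1 : ℝ)).add hsq).mono' (by fun_prop)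
      (Filter.Eventually.of_forall fun z => ?_)
    rw [Real.norm_eq_abs, abs_le, Pi.add_apply]
    constructor <;> nlinarith [sq_nonneg (z.2 + 1), sq_nonneg (z.2 - 1), sq_nonneg z.1]
  rw [hηκ] at i12 i1 i2 ⊢
  have hcomp : ∀ f : ℝ × ℝ → ℝ, Integrable f (ν.bind κ) →
      ∫ z, f z ∂(ν.bind κ) = ∫ w, ∫ z, f z ∂(κ w) ∂ν := by
    intro f hf
    rw [Measure.comp_eq_comp_const_apply] at hf ⊢
    rw [Kernel.integral_comp hf, Kernel.const_apply]
  rw [hcomp _ i12, hcomp _ i1, hcomp _ i2]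
  simp_rw [hκ]
  refine ⟨integral_congr_ae (.of_forall fun w => ?_), integral_congr_ae (.of_forall fun w => ?_),
    integral_congr_ae (.of_forall fun w => ?_)⟩
  · simp only
    rw [integral_prod_mul (fun x : ℝ => x) (fun x : ℝ => x)]
    simp
  · simp only
    rw [integral_fun_fst (fun x : ℝ => x)]
    simp
  · simp only
    rw [integral_fun_snd (fun x : ℝ => x)]
    simp

/-! ### Gaussian bumps under a Gaussian input -/

lemma continuous_rbf {n : ℕ} (A : Matrix (Fin n) (Fin n) ℝ) (c : Fin n → ℝ) :
    Continuous fun w : Fin n → ℝ => Real.exp (-(1 / 2) * ((w - c) ⬝ᵥ (A *ᵥ (w - c)))) := by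
  have h : Continuous fun w : Fin n → ℝ => w - c := by fun_prop
  have h2 : Continuous fun w : Fin n → ℝ => A *ᵥ (w - c) :=
    Continuous.matrix_mulVec continuous_const h
  exact Real.continuous_exp.comp (continuous_const.mul (h.dotProduct h2))

lemma rbf_le_one {n : ℕ} {A : Matrix (Fin n) (Fin n) ℝ} (hA : A.PosDef) (x : Fin n → ℝ) :
    Real.exp (-(1 / 2) * (x ⬝ᵥ (A *ᵥ x))) ≤ 1 := by
  have h := hA.posSemidef.dotProduct_mulVec_nonneg x
  simp only [star_trivial] at h
  rw [Real.exp_le_one_iff]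
  linarith

lemma integrable_gaussDensity {n : ℕ} (μ : Fin n → ℝ) {S : Matrix (Fin n) (Fin n) ℝ}
    (hS : S.PosDef) : Integrable (gaussDensity μ S) :=
  (gauss_integral hS.inv μ).1.const_mul _

/-- Expectation of an unnormalised Gaussian bump with precision `P` and centre `u` under
`N(μ, S)`. -/
lemma integral_rbf {n : ℕ} {P S : Matrix (Fin n) (Fin n) ℝ} (hP : P.PosDef) (hS : S.PosDef)
    (μ u : Fin n → ℝ) {ν : Measure (Fin n → ℝ)}
    (hν : ν = volume.withDensity fun w => ENNReal.ofReal (gaussDensity μ S w)) :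
    ∫ w, Real.exp (-(1 / 2) * ((w - u) ⬝ᵥ (P *ᵥ (w - u)))) ∂ν =
      (P * S + 1).det ^ (-(1 : ℝ) / 2) *
        Real.exp (-(1 / 2) * ((u - μ) ⬝ᵥ ((P⁻¹ + S)⁻¹ *ᵥ (u - μ)))) := by
  have hSu : IsUnit S.det := hS.det_pos.ne'.isUnit
  have hPS : (P + S⁻¹).PosDef := hP.add hS.inv
  have hPSu : IsUnit (P + S⁻¹).det := hPS.det_pos.ne'.isUnit
  let c := (P + S⁻¹)⁻¹ *ᵥ (P *ᵥ u + S⁻¹ *ᵥ μ)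
  have hc : (P + S⁻¹) *ᵥ c = P *ᵥ u + S⁻¹ *ᵥ μ := by
    simp only [c]
    rw [mulVec_mulVec, mul_nonsing_inv _ hPSu, one_mulVec]
  have key : ∀ w : Fin n → ℝ, (ENNReal.ofReal (gaussDensity μ S w)).toReal •
      Real.exp (-(1 / 2) * ((w - u) ⬝ᵥ (P *ᵥ (w - u)))) =
      ((2 * Real.pi) ^ (-(n : ℝ) / 2) * S.det ^ (-(1 : ℝ) / 2) *
        Real.exp (-(1 / 2) * ((u - μ) ⬝ᵥ ((P⁻¹ + S)⁻¹ *ᵥ (u - μ))))) *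
        Real.exp (-(1 / 2) * ((w - c) ⬝ᵥ ((P + S⁻¹) *ᵥ (w - c)))) := by
    intro w
    have hsq := quad_complete_square hP hS.inv hc w
    rw [nonsing_inv_nonsing_inv _ hSu] at hsq
    rw [ENNReal.toReal_ofReal (gaussDensity_nonneg μ hS w), smul_eq_mul, gaussDensity,
      mul_assoc _ (Real.exp _) (Real.exp _), ← Real.exp_add,
      mul_assoc _ (Real.exp _) (Real.exp _), ← Real.exp_add]
    congr 2
    linear_combination (-(1 / 2)) * hsq
  rw [hν, integral_withDensity_eq_integral_toReal_smul
    (continuous_gaussDensity μ S).measurable.ennreal_ofReal (by simp)]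
  simp_rw [key]
  rw [integral_const_mul, (gauss_integral hPS c).2]
  have hdet : (P * S + 1).det = S.det * (P + S⁻¹).det := by
    rw [mul_comm, ← det_mul, add_mul, nonsing_inv_mul _ hSu]
  have hpi : (2 * Real.pi) ^ (-(n : ℝ) / 2) * (2 * Real.pi) ^ ((n : ℝ) / 2) = 1 := by
    rw [← Real.rpow_add (by positivity), neg_div, neg_add_cancel, Real.rpow_zero]
  rw [hdet, Real.mul_rpow hS.det_pos.le hPS.det_pos.le]
  linear_combination (S.det ^ (-(1 : ℝ) / 2) * (P + S⁻¹).det ^ (-(1 : ℝ) / 2) *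
    Real.exp (-(1 / 2) * ((u - μ) ⬝ᵥ ((P⁻¹ + S)⁻¹ *ᵥ (u - μ))))) * hpi

/-- The product of two Gaussian bumps with length-scale matrices `Λ`, `Γ` is a constant multiple of
one bump with precision `Λ⁻¹ + Γ⁻¹`, centred at the matrix-weighted mean of the two centres. -/
lemma rbf_mul_rbf {n : ℕ} {Λ Γ : Matrix (Fin n) (Fin n) ℝ} (hΛ : Λ.PosDef) (hΓ : Γ.PosDef)
    (u v w : Fin n → ℝ) :
    Real.exp (-(1 / 2) * ((w - u) ⬝ᵥ (Λ⁻¹ *ᵥ (w - u)))) *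
        Real.exp (-(1 / 2) * ((w - v) ⬝ᵥ (Γ⁻¹ *ᵥ (w - v)))) =
      Real.exp (-(1 / 2) * ((u - v) ⬝ᵥ ((Λ + Γ)⁻¹ *ᵥ (u - v)))) *
        Real.exp (-(1 / 2) *
          ((w - ((Γ * (Λ + Γ)⁻¹) *ᵥ u + (Λ * (Λ + Γ)⁻¹) *ᵥ v)) ⬝ᵥ
            ((Λ⁻¹ + Γ⁻¹) *ᵥ (w - ((Γ * (Λ + Γ)⁻¹) *ᵥ u + (Λ * (Λ + Γ)⁻¹) *ᵥ v))))) := by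
  have hΛu : IsUnit Λ.det := hΛ.det_pos.ne'.isUnit
  have hΓu : IsUnit Γ.det := hΓ.det_pos.ne'.isUnit
  have hu : IsUnit (Λ + Γ).det := (hΛ.add hΓ).det_pos.ne'.isUnit
  have h1 : (Λ⁻¹ + Γ⁻¹) * (Γ * (Λ + Γ)⁻¹) = Λ⁻¹ := by
    calc (Λ⁻¹ + Γ⁻¹) * (Γ * (Λ + Γ)⁻¹)
        = Λ⁻¹ * ((Λ + Γ) * (Λ + Γ)⁻¹) + (Γ⁻¹ * Γ - Λ⁻¹ * Λ) * (Λ + Γ)⁻¹ := by noncomm_ring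
      _ = Λ⁻¹ := by
        rw [mul_nonsing_inv _ hu, nonsing_inv_mul _ hΛu, nonsing_inv_mul _ hΓu]; simp
  have h2 : (Λ⁻¹ + Γ⁻¹) * (Λ * (Λ + Γ)⁻¹) = Γ⁻¹ := by
    calc (Λ⁻¹ + Γ⁻¹) * (Λ * (Λ + Γ)⁻¹)
        = Γ⁻¹ * ((Λ + Γ) * (Λ + Γ)⁻¹) + (Λ⁻¹ * Λ - Γ⁻¹ * Γ) * (Λ + Γ)⁻¹ := by noncomm_ring
      _ = Γ⁻¹ := by
        rw [mul_nonsing_inv _ hu, nonsing_inv_mul _ hΛu, nonsing_inv_mul _ hΓu]; simp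
  have hc : (Λ⁻¹ + Γ⁻¹) *ᵥ ((Γ * (Λ + Γ)⁻¹) *ᵥ u + (Λ * (Λ + Γ)⁻¹) *ᵥ v) =
      Λ⁻¹ *ᵥ u + Γ⁻¹ *ᵥ v := by
    rw [mulVec_add, mulVec_mulVec, mulVec_mulVec, h1, h2]
  have hsq := quad_complete_square hΛ.inv hΓ.inv hc w
  rw [nonsing_inv_nonsing_inv _ hΛu, nonsing_inv_nonsing_inv _ hΓu] at hsq
  rw [← Real.exp_add, ← Real.exp_add]
  congr 1
  linear_combination (-(1 / 2)) * hsq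

lemma quad_sub_comm {n : ℕ} (A : Matrix (Fin n) (Fin n) ℝ) (x y : Fin n → ℝ) :
    (x - y) ⬝ᵥ (A *ᵥ (x - y)) = (y - x) ⬝ᵥ (A *ᵥ (y - x)) := by
  rw [← neg_sub y x, mulVec_neg, neg_dotProduct, dotProduct_neg, neg_neg]

/-! ### Predictive means -/

/-- The sparse Gaussian process predictive mean with squared-exponential kernel of length-scale
matrix `Λ` and signal variance `σ ^ 2`, inducing inputs `wi` and weights `a`. -/
noncomputable def rbfMean {n M : ℕ} (Λ : Matrix (Fin n) (Fin n) ℝ) (σ : ℝ)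
    (wi : Fin M → Fin n → ℝ) (a : Fin M → ℝ) (w : Fin n → ℝ) : ℝ :=
  ∑ τ : Fin M, a τ * (σ ^ 2 * Real.exp (-(1 / 2) * ((w - wi τ) ⬝ᵥ (Λ⁻¹ *ᵥ (w - wi τ)))))

lemma continuous_rbfMean {n M : ℕ} (Λ : Matrix (Fin n) (Fin n) ℝ) (σ : ℝ)
    (wi : Fin M → Fin n → ℝ) (a : Fin M → ℝ) : Continuous (rbfMean Λ σ wi a) :=
  continuous_finsetSum _ fun τ _ =>
    continuous_const.mul (continuous_const.mul (continuous_rbf Λ⁻¹ (wi τ)))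

lemma abs_rbfMean_le {n M : ℕ} {Λ : Matrix (Fin n) (Fin n) ℝ} (hΛ : Λ.PosDef) (σ : ℝ)
    (wi : Fin M → Fin n → ℝ) (a : Fin M → ℝ) (w : Fin n → ℝ) :
    |rbfMean Λ σ wi a w| ≤ ∑ τ, |a τ| * σ ^ 2 := by
  refine (Finset.abs_sum_le_sum_abs _ _).trans (Finset.sum_le_sum fun τ _ => ?_)
  rw [abs_mul, abs_mul, abs_of_nonneg (sq_nonneg σ), Real.abs_exp]
  exact mul_le_mul_of_nonneg_left
    (mul_le_of_le_one_right (sq_nonneg σ) (rbf_le_one hΛ.inv _)) (abs_nonneg _)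

lemma integrable_rbf {n : ℕ} {A : Matrix (Fin n) (Fin n) ℝ} (hA : A.PosDef) (c : Fin n → ℝ)
    (ν : Measure (Fin n → ℝ)) [IsFiniteMeasure ν] :
    Integrable (fun w : Fin n → ℝ => Real.exp (-(1 / 2) * ((w - c) ⬝ᵥ (A *ᵥ (w - c))))) ν := by
  refine Integrable.of_bound (continuous_rbf A c).aestronglyMeasurable 1
    (Filter.Eventually.of_forall fun w => ?_)
  rw [Real.norm_eq_abs, Real.abs_exp]
  exact rbf_le_one hA _

lemma integrable_rbfMean_sq {n M : ℕ} {Λ : Matrix (Fin n) (Fin n) ℝ} (hΛ : Λ.PosDef) (σ : ℝ)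
    (wi : Fin M → Fin n → ℝ) (a : Fin M → ℝ) (ν : Measure (Fin n → ℝ)) [IsFiniteMeasure ν] :
    Integrable (fun w => rbfMean Λ σ wi a w ^ 2) ν := by
  refine Integrable.of_bound ((continuous_rbfMean Λ σ wi a).pow 2).aestronglyMeasurable
    ((∑ τ, |a τ| * σ ^ 2) ^ 2) (Filter.Eventually.of_forall fun w => ?_)
  rw [norm_pow, Real.norm_eq_abs]
  exact pow_le_pow_left₀ (abs_nonneg _) (abs_rbfMean_le hΛ σ wi a w) 2

lemma integral_rbfMean {n M : ℕ} {Λ S : Matrix (Fin n) (Fin n) ℝ} (hΛ : Λ.PosDef) (hS : S.PosDef)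
    (σ : ℝ) (μ : Fin n → ℝ) (wi : Fin M → Fin n → ℝ) (a l : Fin M → ℝ)
    {ν : Measure (Fin n → ℝ)} [IsFiniteMeasure ν]
    (hν : ν = volume.withDensity fun w => ENNReal.ofReal (gaussDensity μ S w))
    (hl : ∀ τ : Fin M, l τ =
      σ ^ 2 * ((Λ⁻¹ * S + 1).det) ^ (-(1 : ℝ) / 2) *
        Real.exp (-(1 / 2) * ((μ - wi τ) ⬝ᵥ ((Λ + S)⁻¹ *ᵥ (μ - wi τ))))) :
    ∫ w, rbfMean Λ σ wi a w ∂ν = a ⬝ᵥ l := by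
  simp only [rbfMean]
  rw [integral_finsetSum _ fun τ _ => ((integrable_rbf hΛ.inv (wi τ) ν).const_mul _).const_mul _]
  refine Finset.sum_congr rfl fun τ _ => ?_
  rw [integral_const_mul, integral_const_mul, integral_rbf hΛ.inv hS μ (wi τ) hν, hl τ,
    nonsing_inv_nonsing_inv _ hΛ.det_pos.ne'.isUnit, quad_sub_comm _ (wi τ) μ, mul_assoc (σ ^ 2)]

lemma integral_rbfMean_mul {n M : ℕ} {Λ Γ S : Matrix (Fin n) (Fin n) ℝ} (hΛ : Λ.PosDef)
    (hΓ : Γ.PosDef) (hS : S.PosDef) (σ σ' : ℝ) (μ : Fin n → ℝ) (wi : Fin M → Fin n → ℝ)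
    (a b : Fin M → ℝ) (L : Matrix (Fin M) (Fin M) ℝ)
    {ν : Measure (Fin n → ℝ)} [IsFiniteMeasure ν]
    (hν : ν = volume.withDensity fun w => ENNReal.ofReal (gaussDensity μ S w))
    (hL : ∀ τ τ' : Fin M, L τ τ' =
      σ ^ 2 * σ' ^ 2 * (((Λ⁻¹ + Γ⁻¹) * S + 1).det) ^ (-(1 : ℝ) / 2) *
        Real.exp (-(1 / 2) * ((wi τ - wi τ') ⬝ᵥ ((Λ + Γ)⁻¹ *ᵥ (wi τ - wi τ')))) *
        Real.exp (-(1 / 2) *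
          ((((Γ * (Λ + Γ)⁻¹) *ᵥ wi τ + (Λ * (Λ + Γ)⁻¹) *ᵥ wi τ') - μ) ⬝ᵥ
            (((Λ⁻¹ + Γ⁻¹)⁻¹ + S)⁻¹ *ᵥ
              (((Γ * (Λ + Γ)⁻¹) *ᵥ wi τ + (Λ * (Λ + Γ)⁻¹) *ᵥ wi τ') - μ))))) :
    ∫ w, rbfMean Λ σ wi a w * rbfMean Γ σ' wi b w ∂ν = a ⬝ᵥ (L *ᵥ b) := by
  have hP : (Λ⁻¹ + Γ⁻¹).PosDef := hΛ.inv.add hΓ.inv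
  let q : Fin M → Fin M → Fin n → ℝ := fun τ τ' =>
    (Γ * (Λ + Γ)⁻¹) *ᵥ wi τ + (Λ * (Λ + Γ)⁻¹) *ᵥ wi τ'
  let C : Fin M → Fin M → ℝ := fun τ τ' => a τ * b τ' * (σ ^ 2 * σ' ^ 2) *
    Real.exp (-(1 / 2) * ((wi τ - wi τ') ⬝ᵥ ((Λ + Γ)⁻¹ *ᵥ (wi τ - wi τ'))))
  have hprod : ∀ w, rbfMean Λ σ wi a w * rbfMean Γ σ' wi b w =
      ∑ τ, ∑ τ', C τ τ' *
        Real.exp (-(1 / 2) * ((w - q τ τ') ⬝ᵥ ((Λ⁻¹ + Γ⁻¹) *ᵥ (w - q τ τ')))) := by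
    intro w
    simp only [rbfMean]
    rw [Finset.sum_mul_sum]
    refine Finset.sum_congr rfl fun τ _ => Finset.sum_congr rfl fun τ' _ => ?_
    have h := rbf_mul_rbf hΛ hΓ (wi τ) (wi τ') w
    simp only [C, q]
    linear_combination (a τ * b τ' * (σ ^ 2 * σ' ^ 2)) * h
  have hint : ∀ τ τ', Integrable (fun w => C τ τ' *
      Real.exp (-(1 / 2) * ((w - q τ τ') ⬝ᵥ ((Λ⁻¹ + Γ⁻¹) *ᵥ (w - q τ τ'))))) ν :=
    fun τ τ' => (integrable_rbf hP (q τ τ') ν).const_mul _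
  simp_rw [hprod]
  rw [integral_finsetSum _ fun τ _ => integrable_finsetSum _ fun τ' _ => hint τ τ']
  have hbil : a ⬝ᵥ (L *ᵥ b) = ∑ τ, ∑ τ', a τ * (L τ τ' * b τ') := by
    simp only [dotProduct, mulVec, Finset.mul_sum]
  rw [hbil]
  refine Finset.sum_congr rfl fun τ _ => ?_
  rw [integral_finsetSum _ fun τ' _ => hint τ τ']
  refine Finset.sum_congr rfl fun τ' _ => ?_
  have h := integral_rbf hP hS μ (q τ τ') hν
  rw [integral_const_mul, h, hL τ τ']
  simp only [C, q]
  ring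

/-- Closed-form moment-matching cross-covariance between two conditionally independent
GP output dimensions under a Gaussian input `w ~ N(μ, Σ)`:
`cov(z₁, z₂) = aᵀ L b − (aᵀ lᵢ)(bᵀ lⱼ)`. -/
theorem sparse_gp_mm_cross_output_covariance (n M : ℕ)
    (Λi Λj Sig : Matrix (Fin n) (Fin n) ℝ)
    (hΛi : Λi.PosDef) (hΛj : Λj.PosDef) (hSig : Sig.PosDef)
    (σi σj : ℝ) (hσi : 0 < σi) (hσj : 0 < σj)
    (μ : Fin n → ℝ) (wi : Fin M → Fin n → ℝ) (a b : Fin M → ℝ)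
    (si sj : (Fin n → ℝ) → ℝ≥0) (hsi : Measurable si) (hsj : Measurable sj)
    (ν : Measure (Fin n → ℝ))
    (hν : ν = volume.withDensity fun w => ENNReal.ofReal (gaussDensity μ Sig w))
    (hsiInt : Integrable (fun w => (si w : ℝ)) ν)
    (hsjInt : Integrable (fun w => (sj w : ℝ)) ν)
    (li lj : Fin M → ℝ)
    (hli : ∀ τ : Fin M, li τ =
      σi ^ 2 * ((Λi⁻¹ * Sig + 1).det) ^ (-(1 : ℝ) / 2) *
        Real.exp (-(1 / 2) * ((μ - wi τ) ⬝ᵥ ((Λi + Sig)⁻¹ *ᵥ (μ - wi τ)))))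
    (hlj : ∀ τ : Fin M, lj τ =
      σj ^ 2 * ((Λj⁻¹ * Sig + 1).det) ^ (-(1 : ℝ) / 2) *
        Real.exp (-(1 / 2) * ((μ - wi τ) ⬝ᵥ ((Λj + Sig)⁻¹ *ᵥ (μ - wi τ)))))
    (L : Matrix (Fin M) (Fin M) ℝ)
    (hL : ∀ τ τ' : Fin M, L τ τ' =
      σi ^ 2 * σj ^ 2 * (((Λi⁻¹ + Λj⁻¹) * Sig + 1).det) ^ (-(1 : ℝ) / 2) *
        Real.exp (-(1 / 2) * ((wi τ - wi τ') ⬝ᵥ ((Λi + Λj)⁻¹ *ᵥ (wi τ - wi τ')))) *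
        Real.exp (-(1 / 2) *
          ((((Λj * (Λi + Λj)⁻¹) *ᵥ wi τ + (Λi * (Λi + Λj)⁻¹) *ᵥ wi τ') - μ) ⬝ᵥ
            (((Λi⁻¹ + Λj⁻¹)⁻¹ + Sig)⁻¹ *ᵥ
              (((Λj * (Λi + Λj)⁻¹) *ᵥ wi τ + (Λi * (Λi + Λj)⁻¹) *ᵥ wi τ') - μ)))))
    (η : Measure (ℝ × ℝ))
    (hη : η = ν.bind fun w =>
      (gaussianReal
          (∑ τ : Fin M,
            a τ * (σi ^ 2 * Real.exp (-(1 / 2) * ((w - wi τ) ⬝ᵥ (Λi⁻¹ *ᵥ (w - wi τ))))))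
          (si w)).prod
        (gaussianReal
          (∑ τ' : Fin M,
            b τ' * (σj ^ 2 * Real.exp (-(1 / 2) * ((w - wi τ') ⬝ᵥ (Λj⁻¹ *ᵥ (w - wi τ'))))))
          (sj w))) :
    (∫ z : ℝ × ℝ, z.1 * z.2 ∂η) - (∫ z : ℝ × ℝ, z.1 ∂η) * (∫ z : ℝ × ℝ, z.2 ∂η)
      = a ⬝ᵥ (L *ᵥ b) - (a ⬝ᵥ li) * (b ⬝ᵥ lj) := by
  have hfin : IsFiniteMeasure ν := by
    rw [hν]
    exact isFiniteMeasure_withDensity_ofReal (integrable_gaussDensity μ hSig).2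
  obtain ⟨h12, h1, h2⟩ := mixture_moments ν (continuous_rbfMean Λi σi wi a).measurable
    (continuous_rbfMean Λj σj wi b).measurable hsi hsj (integrable_rbfMean_sq hΛi σi wi a ν)
    (integrable_rbfMean_sq hΛj σj wi b ν) hsiInt hsjInt hη
  rw [h12, h1, h2, integral_rbfMean_mul hΛi hΛj hSig σi σj μ wi a b L hν hL,
    integral_rbfMean hΛi hSig σi μ wi a li hν hli, integral_rbfMean hΛj hSig σj μ wi b lj hν hlj]
end
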